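/- arXiv:0712.3486 — 6 statements merged into one kernel-verified Lean document; each statement's English description precedes it below -/
import Mathlib

section
/- For every separable Banach space X there exists a sequence (a_k)_{k≥1} of elements of X such that: (1) for every infinite subset A ⊆ ℕ, the closed linear span of {a_k : k ∈ A} equals X; and (2) for every bounded linear operator T : X → X, the set {T a_k / ‖T a_k‖ : k ≥ 1, T a_k ≠ 0} is relatively compact in X. -/
/-!
Choose a bounded sequence `(xₙ)` with dense span and sample the real-analytic curve
`γ t = ∑ tⁿ xₙ` along a sequence of positive reals tending to `0`. If a closed subspace contains
`γ t` for `t` accumulating at `0`, then `γ` vanishes near `0` modulo that subspace, which hence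
contains every coefficient `xₙ`. On the other hand `T ∘ γ` is analytic for every bounded
operator `T`, so it either vanishes near `0` or has the form `tⁿ • g t` with `g 0 ≠ 0`; in the
second case its direction converges to that of `g 0` as `t → 0⁺`.
-/

open Filter NormedSpace Topology

section PowerSeries

variable {𝕜 E : Type*} [NontriviallyNormedField 𝕜] [NormedAddCommGroup E] [NormedSpace 𝕜 E]

theorem exists_hasFPowerSeriesAt_coeff_eq [CompleteSpace E] {x : ℕ → E} {C : ℝ}
    (hx : ∀ n, ‖x n‖ ≤ C) :
    ∃ (f : 𝕜 → E) (p : FormalMultilinearSeries 𝕜 𝕜 E),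
      HasFPowerSeriesAt f p 0 ∧ ∀ n, p.coeff n = x n := by
  let p : FormalMultilinearSeries 𝕜 𝕜 E :=
    fun n ↦ ContinuousMultilinearMap.mkPiRing 𝕜 (Fin n) (x n)
  have hp_coeff (n : ℕ) : p.coeff n = x n := by
    simp [p, FormalMultilinearSeries.coeff]
  have hp_radius : (1 : NNReal) ≤ p.radius :=
    p.le_radius_of_bound C fun n ↦ by simpa [hp_coeff] using hx n
  exact ⟨p.sum, p, (p.hasFPowerSeriesOnBall (one_pos.trans_le hp_radius)).hasFPowerSeriesAt,
    hp_coeff⟩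

theorem coeff_mem_of_frequently_mem {f : 𝕜 → E} {p : FormalMultilinearSeries 𝕜 𝕜 E} {z : 𝕜}
    (hf : HasFPowerSeriesAt f p z) {S : Submodule 𝕜 E} (hS : IsClosed (S : Set E))
    (hfS : ∃ᶠ w in 𝓝[≠] z, f w ∈ S) (n : ℕ) : p.coeff n ∈ S := by
  obtain ⟨r, hr⟩ := hf
  have hπ : HasFPowerSeriesAt (S.mkQL ∘ f) (S.mkQL.compFormalMultilinearSeries p) z :=
    (S.mkQL.comp_hasFPowerSeriesOnBall hr).hasFPowerSeriesAt
  have hπ_zero : S.mkQL.compFormalMultilinearSeries p = 0 := by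
    by_contra h
    refine hfS ((hπ.locally_ne_zero h).mono fun w hw hwS ↦ hw ?_)
    exact (Submodule.Quotient.mk_eq_zero S).2 hwS
  exact (Submodule.Quotient.mk_eq_zero S).1 (DFunLike.congr_fun (congrFun hπ_zero n) 1)

end PowerSeries

theorem exists_tendsto_normalize_nhdsGT {Y : Type*} [NormedAddCommGroup Y] [NormedSpace ℝ Y]
    {f : ℝ → Y} {t₀ : ℝ} (hf : AnalyticAt ℝ f t₀) :
    ∃ l, Tendsto (fun t ↦ normalize (f t)) (𝓝[>] t₀) (𝓝 l) := by
  by_cases h0 : ∀ᶠ t in 𝓝 t₀, f t = 0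
  · refine ⟨0, tendsto_const_nhds.congr' ?_⟩
    filter_upwards [h0.filter_mono nhdsWithin_le_nhds] with t ht
    rw [ht, normalize_zero_eq_zero]
  · obtain ⟨n, g, hg, hg0, hfg⟩ := hf.exists_eventuallyEq_pow_smul_nonzero_iff.2 h0
    have hg_lim : Tendsto (fun t ↦ normalize (g t)) (𝓝 t₀) (𝓝 (normalize (g t₀))) :=
      (hg.continuousAt.norm.inv₀ (norm_ne_zero_iff.2 hg0)).smul hg.continuousAt
    refine ⟨normalize (g t₀), (hg_lim.mono_left nhdsWithin_le_nhds).congr' ?_⟩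
    filter_upwards [hfg.filter_mono nhdsWithin_le_nhds, self_mem_nhdsWithin] with t ht ht_gt
    rw [ht, normalize_smul_of_pos (pow_pos (sub_pos.2 ht_gt) n)]

theorem isCompact_closure_setOf_normalize_of_tendsto {Y : Type*} [NormedAddCommGroup Y]
    [NormedSpace ℝ Y] {y : ℕ → Y} {l : Y} (hy : Tendsto (fun k ↦ normalize (y k)) atTop (𝓝 l)) :
    IsCompact (closure {v : Y | ∃ k, y k ≠ 0 ∧ v = ‖y k‖⁻¹ • y k}) := by
  refine hy.isCompact_insert_range.closure_of_subset ?_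
  rintro _ ⟨k, -, rfl⟩
  exact Or.inr ⟨k, rfl⟩

section RealBanach

variable (X : Type*) [NormedAddCommGroup X] [NormedSpace ℝ X] [TopologicalSpace.SeparableSpace X]

theorem exists_seq_norm_le_one_dense_span :
    ∃ x : ℕ → X, (∀ n, ‖x n‖ ≤ 1) ∧ Dense (Submodule.span ℝ (Set.range x) : Set X) := by
  let d := TopologicalSpace.denseSeq X
  refine ⟨fun n ↦ normalize (d n), fun n ↦ ?_, ?_⟩
  · by_cases hn : d n = 0
    · simp [hn]
    · exact (norm_normalize hn).le
  · refine (TopologicalSpace.denseRange_denseSeq X).mono ?_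
    rintro _ ⟨n, rfl⟩
    rw [← norm_smul_normalize (TopologicalSpace.denseSeq X n)]
    exact Submodule.smul_mem _ _ (Submodule.subset_span ⟨n, rfl⟩)

theorem exists_analyticAt_dense_span_image [CompleteSpace X] :
    ∃ γ : ℝ → X, AnalyticAt ℝ γ 0 ∧
      ∀ s : Set ℝ, (∃ᶠ t in 𝓝[≠] 0, t ∈ s) → Dense (Submodule.span ℝ (γ '' s) : Set X) := by
  obtain ⟨x, hx_le, hx_dense⟩ := exists_seq_norm_le_one_dense_span X
  obtain ⟨γ, p, hγ, hp⟩ := exists_hasFPowerSeriesAt_coeff_eq (𝕜 := ℝ) hx_le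
  refine ⟨γ, hγ.analyticAt, fun s hs ↦ ?_⟩
  let S := (Submodule.span ℝ (γ '' s)).topologicalClosure
  have hγS : ∃ᶠ t in 𝓝[≠] 0, γ t ∈ S := hs.mono fun t ht ↦
    Submodule.le_topologicalClosure _ (Submodule.subset_span ⟨t, ht, rfl⟩)
  have hxS : Submodule.span ℝ (Set.range x) ≤ S := by
    rw [Submodule.span_le]
    rintro _ ⟨n, rfl⟩
    exact hp n ▸ coeff_mem_of_frequently_mem hγ (Submodule.isClosed_topologicalClosure _) hγS n
  exact dense_closure.1 (hx_dense.mono hxS)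

theorem exists_crc_like_generating_sequence_general [CompleteSpace X] :
    ∃ a : ℕ → X,
      (∀ A : Set ℕ, A.Infinite → Dense (Submodule.span ℝ (a '' A) : Set X)) ∧
      ∀ (Y : Type*) [NormedAddCommGroup Y] [NormedSpace ℝ Y] (T : X →L[ℝ] Y),
        ∃ l, Tendsto (fun k ↦ normalize (T (a k))) atTop (𝓝 l) := by
  obtain ⟨γ, hγ, hγ_dense⟩ := exists_analyticAt_dense_span_image X
  obtain ⟨t, ht⟩ := exists_seq_tendsto (𝓝[>] (0 : ℝ))
  refine ⟨γ ∘ t, fun A hA ↦ ?_, fun Y _ _ T ↦ ?_⟩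
  · rw [Set.image_comp]
    refine hγ_dense _ ((ht.mono_right (nhdsGT_le_nhdsNE 0)).frequently ?_)
    exact (Nat.frequently_atTop_iff_infinite.2 hA).mono fun k hk ↦ Set.mem_image_of_mem t hk
  · obtain ⟨l, hl⟩ := exists_tendsto_normalize_nhdsGT ((T.analyticAt _).comp hγ)
    exact ⟨l, hl.comp ht⟩

end RealBanach

/-- For every separable (complex) Banach space `X` there is a sequence `(aₖ)` such that the
closed linear span of `{aₖ : k ∈ A}` is `X` for every infinite `A ⊆ ℕ`, and for every bounded
linear operator `T : X → X` the normalized sequence `{T aₖ / ‖T aₖ‖ : T aₖ ≠ 0}` is relatively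
compact in `X`. -/
theorem exists_crc_like_generating_sequence
    (X : Type*) [NormedAddCommGroup X] [NormedSpace ℂ X] [CompleteSpace X]
    [TopologicalSpace.SeparableSpace X] :
    ∃ a : ℕ → X,
      (∀ A : Set ℕ, A.Infinite →
        (Submodule.span ℂ (a '' A)).topologicalClosure = ⊤) ∧
      ∀ T : X →L[ℂ] X,
        IsCompact (closure {v : X | ∃ k, T (a k) ≠ 0 ∧ v = ‖T (a k)‖⁻¹ • T (a k)}) := by
  obtain ⟨a, ha_dense, ha_lim⟩ := exists_crc_like_generating_sequence_general X
  refine ⟨a, fun A hA ↦ ?_, fun T ↦ ?_⟩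
  · exact Submodule.dense_iff_topologicalClosure_eq_top.1
      ((ha_dense A hA).mono (Submodule.span_subset_span ℝ ℂ _))
  · exact isCompact_closure_setOf_normalize_of_tendsto (ha_lim X (T.restrictScalars ℝ)).choose_spec
end

section
/- Let X be a separable Hilbert space and F ⊆ H²(𝔻, X) a family of functions. If F is cyclic for the backward shift S*, then X_*(F) = X. -/
open scoped InnerProductSpace ENNReal
noncomputable section

/-- The Hardy space `H²(𝔻, X)` identified with `ℓ²(ℕ, X)`. -/
abbrev H2 (X : Type*) [NormedAddCommGroup X] [InnerProductSpace ℂ X] : Type _ :=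
  lp (fun _ : ℕ => X) 2

variable {X : Type*} [NormedAddCommGroup X] [InnerProductSpace ℂ X]

/-- The backward shift `S*` on `H²(𝔻, X)`. -/
def bshift (f : H2 X) : H2 X :=
  ⟨fun n => f (n + 1), by
    have h : Summable fun n : ℕ => ‖f n‖ ^ (2 : ℝ≥0∞).toReal :=
      (memℓp_gen_iff (by norm_num)).1 (lp.memℓp f)
    exact memℓp_gen ((summable_nat_add_iff 1).2 h)⟩

/-- `E_F`: the smallest closed `S*`-invariant subspace containing the family `F`. -/
def EF (F : Set (H2 X)) : Submodule ℂ (H2 X) :=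
  (Submodule.span ℂ {g : H2 X | ∃ f ∈ F, ∃ n : ℕ, g = bshift^[n] f}).topologicalClosure

/-- `E_f` for a single function. -/
def Ef (f : H2 X) : Submodule ℂ (H2 X) :=
  EF {f}

/-- `X_*(F) = ⋂_m closed-span {f̂(k) : k ≥ m, f ∈ F}`. -/
def XstarF (F : Set (H2 X)) : Submodule ℂ X :=
  ⨅ m : ℕ, (Submodule.span ℂ {x : X | ∃ f ∈ F, ∃ k ≥ m, x = f k}).topologicalClosure

def Xstar (f : H2 X) : Submodule ℂ X := XstarF {f}

/-- `P : X → X` is an orthogonal projection: idempotent and self-adjoint. -/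
def IsOrthoProj {Y : Type*} [NormedAddCommGroup Y] [InnerProductSpace ℂ Y]
    (P : Y →L[ℂ] Y) : Prop :=
  (∀ x, P (P x) = P x) ∧ ∀ x y, ⟪P x, y⟫_ℂ = ⟪x, P y⟫_ℂ

/-- A sequence in a Hilbert space is completely relatively compact if for every orthogonal
projection `P` the normalized sequence `{P aₖ / ‖P aₖ‖ : P aₖ ≠ 0}` is relatively compact. -/
def CRC {Y : Type*} [NormedAddCommGroup Y] [InnerProductSpace ℂ Y] (a : ℕ → Y) : Prop :=
  ∀ P : Y →L[ℂ] Y, IsOrthoProj P →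
    IsCompact (closure {v : Y | ∃ k, P (a k) ≠ 0 ∧ v = ‖P (a k)‖⁻¹ • P (a k)})

/-- A subset of `ℕ` is Hadamard lacunary. -/
def HadLac (Λ : Set ℕ) : Prop :=
  ∃ d : ℝ, 1 < d ∧ ∀ m ∈ Λ, ∀ n ∈ Λ, m < n → d * m ≤ n

/-- The Fourier spectrum. -/
def spec (f : H2 X) : Set ℕ := {k : ℕ | f k ≠ 0}

/-- `H²(𝔻, Y)` for a subspace `Y ⊆ X`, as a submodule of `H²(𝔻, X)`. -/
def H2sub (Y : Submodule ℂ X) : Submodule ℂ (H2 X) where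
  carrier := {g : H2 X | ∀ n, g n ∈ Y}
  add_mem' := by
    intro a b ha hb n
    have : (↑(a + b) : ∀ _ : ℕ, X) n = a n + b n := by
      rw [lp.coeFn_add]; rfl
    rw [this]
    exact Y.add_mem (ha n) (hb n)
  zero_mem' := by
    intro n
    have : (↑(0 : H2 X) : ∀ _ : ℕ, X) n = 0 := by rw [lp.coeFn_zero]; rfl
    rw [this]
    exact Y.zero_mem
  smul_mem' := by
    intro c a ha n
    have : (↑(c • a) : ∀ _ : ℕ, X) n = c • a n := by rw [lp.coeFn_smul]; rfl
    rw [this]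
    exact Y.smul_mem c (ha n)

/-- A polynomial: finitely many nonzero Taylor coefficients. -/
def PolyH2 (f : H2 X) : Prop := {n : ℕ | f n ≠ 0}.Finite

/-!
The `m`-th coefficient of `S*ⁿ f` is `f̂(m + n)`, a coefficient of index at least `m`. Taking the
`m`-th coefficient is linear and continuous, so `ĝ(m)` lies in the closed span of
`{f̂(k) : k ≥ m, f ∈ F}` for every `g ∈ E_F`. If `F` is cyclic, then `g` may be the monomial `x zᵐ`
with `x ∈ X` arbitrary.
-/

theorem iterate_bshift_apply (f : H2 X) (n m : ℕ) : (bshift^[n] f) m = f (m + n) := by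
  induction n generalizing f with
  | zero => rfl
  | succ n ih =>
    rw [Function.iterate_succ_apply, ih]
    rfl

theorem EF_le {F : Set (H2 X)} {K : Submodule ℂ (H2 X)} (hK : IsClosed (K : Set (H2 X)))
    (hF : ∀ f ∈ F, ∀ n, bshift^[n] f ∈ K) : EF F ≤ K := by
  refine Submodule.topologicalClosure_minimal _ (Submodule.span_le.2 ?_) hK
  rintro _ ⟨f, hf, n, rfl⟩
  exact hF f hf n

/-- The closed span of the Taylor coefficients of index at least `m` of the functions in `F`; these
are the subspaces whose intersection is `X_*(F)`. -/
def closedTailSpan (F : Set (H2 X)) (m : ℕ) : Submodule ℂ X :=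
  (Submodule.span ℂ {x : X | ∃ f ∈ F, ∃ k ≥ m, x = f k}).topologicalClosure

theorem isClosed_closedTailSpan (F : Set (H2 X)) (m : ℕ) :
    IsClosed (closedTailSpan F m : Set X) :=
  Submodule.isClosed_topologicalClosure _

theorem apply_mem_closedTailSpan {F : Set (H2 X)} {f : H2 X} (hf : f ∈ F) {m k : ℕ}
    (hk : m ≤ k) : f k ∈ closedTailSpan F m :=
  Submodule.le_topologicalClosure _ (Submodule.subset_span ⟨f, hf, k, hk, rfl⟩)

theorem XstarF_eq_top_iff {F : Set (H2 X)} : XstarF F = ⊤ ↔ ∀ m, closedTailSpan F m = ⊤ :=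
  iInf_eq_top

theorem apply_mem_closedTailSpan_of_mem_EF {F : Set (H2 X)} {g : H2 X} (hg : g ∈ EF F) (m : ℕ) :
    g m ∈ closedTailSpan F m := by
  let coeff : H2 X →L[ℂ] X := lp.evalCLM ℂ (fun _ : ℕ => X) 2 m
  suffices h : EF F ≤ (closedTailSpan F m).comap coeff.toLinearMap from h hg
  refine EF_le ((isClosed_closedTailSpan F m).preimage coeff.continuous) fun f hf n => ?_
  change (bshift^[n] f) m ∈ closedTailSpan F m
  rw [iterate_bshift_apply]
  exact apply_mem_closedTailSpan hf (Nat.le_add_right m n)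

theorem Xstar_eq_top_of_cyclic_general {F : Set (H2 X)} (hF : EF F = ⊤) : XstarF F = ⊤ := by
  refine XstarF_eq_top_iff.2 fun m => Submodule.eq_top_iff'.2 fun x => ?_
  have monomial_mem : lp.single 2 m x ∈ EF F := hF ▸ Submodule.mem_top
  simpa only [lp.single_apply_self] using apply_mem_closedTailSpan_of_mem_EF monomial_mem m

/-- If a family `F ⊆ H²(𝔻, X)` is cyclic for the backward shift, then `X_*(F) = X`. -/
theorem Xstar_eq_top_of_cyclic {X : Type*} [NormedAddCommGroup X] [InnerProductSpace ℂ X] [CompleteSpace X]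
    [TopologicalSpace.SeparableSpace X]
    (F : Set (H2 X)) (hF : EF F = ⊤) : XstarF F = ⊤ :=
  Xstar_eq_top_of_cyclic_general hF

end
end

section
/- Let X be a separable Hilbert space and let f(z) = ∑_{k≥1} a_k z^{n_k} ∈ H²(𝔻, X) be a lacunary series (so (n_k)_{k≥1} is a Hadamard lacunary sequence) such that the coefficient sequence (a_k)_{k≥1} is completely relatively compact. Then E_f = H²(𝔻, X_*(f)) ⊕ E_p as an orthogonal direct sum of closed subspaces of H²(𝔻, X), where p = f − P_{H²(𝔻, X_*(f))} f is a polynomial and P_{H²(𝔻, X_*(f))} is the orthogonal projection of H²(𝔻, X) onto H²(𝔻, X_*(f)). -/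
open scoped InnerProductSpace ENNReal
noncomputable section

variable {X : Type*} [NormedAddCommGroup X] [InnerProductSpace ℂ X]

/-!
Let `b` have a spectrum with bounded differences, and let `g ⟂ S*ⁿ b` for all `n`. For `n` large in
the spectrum of `b`, the shift `S*ⁿ⁻ᵐ b` has `b̂(n)` in position `m` and zeros in front of it, so
`⟪ĝ(m), b̂(n)⟫ = -⟪S*ᵐ⁺¹ g, S*ⁿ⁺¹ b⟫`. The Cauchy–Schwarz inequality, restricted to the spectrum of
`S*ⁿ⁺¹ b`, then yields `∑ₙ |⟪ĝ(m), b̂(n)⟫|² / ‖S*ⁿ⁺¹ b‖² < ∞`, since each shift length is used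
boundedly often. If `b` is not a polynomial, the Abel–Dini theorem gives
`∑ₙ ‖b̂(n)‖² / ‖S*ⁿ⁺¹ b‖² = ∞`, so when the directions of the `b̂(n)` are relatively compact, some
unit vector in their closure is orthogonal to every Taylor coefficient of every such `g`.

Let `W` be the closed span of the coefficients of the functions in `E_f^⟂`, and let `b = P_W f`.
Then `E_f^⟂ ⊆ E_b^⟂`, so if `b` were not a polynomial, that unit vector would lie in `W ∩ W^⟂`.
Hence all but finitely many coefficients of `f` lie in `W^⟂`, so `X_*(f) ⟂ W` and therefore
`H²(𝔻, X_*(f)) ⊆ E_f`. The remaining part `p` of `f` is a polynomial because a limit of the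
directions of its coefficients would lie in `X_*(f) ∩ X_*(f)^⟂`.
-/

open Filter Topology

section GeneralLemmas

theorem not_summable_sub_div_succ_of_tendsto_zero {𝕜 : Type*} [NormedField 𝕜] [CompleteSpace 𝕜]
    {T : ℕ → 𝕜} (hT : ∀ n, T n ≠ 0) (hlim : Tendsto T atTop (𝓝 0)) :
    ¬ Summable fun n => ‖(T n - T (n + 1)) / T (n + 1)‖ := by
  intro hsum
  have telescope : ∀ n, T n * ∏ k ∈ Finset.range n, (1 + (T k - T (k + 1)) / T (k + 1)) = T 0 := by
    intro n
    induction n with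
    | zero => simp
    | succ n ih =>
      rw [Finset.prod_range_succ, ← ih]
      field_simp [hT (n + 1)]
      ring
  have hprod := (multipliable_one_add_of_summable hsum).hasProd.tendsto_prod_nat
  have hT0 := hlim.mul hprod
  simp only [telescope, zero_mul, tendsto_const_nhds_iff] at hT0
  exact hT 0 hT0

theorem exists_mem_forall_apply_eq_zero_of_not_summable {ι α : Type*} [TopologicalSpace α]
    {K : Set α} (hK : IsCompact K) {u : ι → α} {δ : ι → ℝ} (hδ : ∀ i, 0 ≤ δ i) (hδs : ¬ Summable δ)
    (hu : ∀ i, δ i ≠ 0 → u i ∈ K) :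
    ∃ v ∈ K, ∀ φ : α → ℝ, Continuous φ → (∀ x, 0 ≤ φ x) →
      Summable (fun i => δ i * φ (u i)) → φ v = 0 := by
  by_contra! h
  choose! φ hcont hnonneg hsum hne using h
  obtain ⟨t, htK, hKt⟩ := hK.elim_nhds_subcover (fun v => {x | 0 < φ v x}) fun v hv =>
    (isOpen_lt continuous_const (hcont v hv)).mem_nhds ((hnonneg v hv v).lt_of_ne' (hne v hv))
  obtain ⟨c, hc, hcK⟩ : ∃ c, 0 < c ∧ ∀ x ∈ K, c ≤ ∑ v ∈ t, φ v x := by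
    refine hK.exists_forall_le' (continuous_finsetSum t fun v hv =>
      hcont v (htK v hv)).continuousOn fun x hx => ?_
    obtain ⟨v, hvt, hvx⟩ := Set.mem_iUnion₂.1 (hKt hx)
    exact Finset.sum_pos' (fun w hw => hnonneg w (htK w hw) x) ⟨v, hvt, hvx⟩
  have hbound : ∀ i, δ i * c ≤ ∑ v ∈ t, δ i * φ v (u i) := by
    intro i
    rw [← Finset.mul_sum]
    by_cases hi : δ i = 0
    · simp [hi]
    · exact mul_le_mul_of_nonneg_left (hcK _ (hu i hi)) (hδ i)
  exact hδs <| (summable_mul_right_iff hc.ne').1 <|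
    (summable_sum fun v hv => hsum v (htK v hv)).of_nonneg_of_le
      (fun i => mul_nonneg (hδ i) hc.le) hbound

theorem summable_indicator_fst_of_encard_le {α β : Type*} {R : Set (α × β)} {C : ℕ}
    (hR : ∀ a, {b | (a, b) ∈ R}.encard ≤ C) {w : α → ℝ} (hw : ∀ a, 0 ≤ w a) (hws : Summable w) :
    Summable (R.indicator fun q => w q.1) := by
  have hfib : ∀ a, (fun b => R.indicator (fun q => w q.1) (a, b)) =
      {b | (a, b) ∈ R}.indicator fun _ => w a := fun a => rfl
  have hfin : ∀ a, {b | (a, b) ∈ R}.Finite := fun a => Set.finite_of_encard_le_coe (hR a)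
  rw [summable_prod_of_nonneg (Set.indicator_nonneg fun q _ => hw q.1)]
  refine ⟨fun a => ?_, ?_⟩
  · rw [hfib]
    exact summable_of_hasFiniteSupport ((hfin a).subset Set.support_indicator_subset)
  · refine (hws.mul_left (C : ℝ)).of_nonneg_of_le
      (fun a => tsum_nonneg fun b => Set.indicator_nonneg (fun q _ => hw q.1) _) fun a => ?_
    rw [hfib, ← tsum_subtype, tsum_const, nsmul_eq_mul]
    refine mul_le_mul_of_nonneg_right ?_ (hw a)
    have := hR a
    rw [← (hfin a).cast_ncard_eq] at this
    exact_mod_cast this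

theorem norm_sq_mul_norm_inner_normalize_sq {E : Type*} [NormedAddCommGroup E]
    [InnerProductSpace ℂ E] (x y : E) : ‖y‖ ^ 2 * ‖⟪x, ‖y‖⁻¹ • y⟫_ℂ‖ ^ 2 = ‖⟪x, y⟫_ℂ‖ ^ 2 := by
  conv_rhs => rw [← NormedSpace.norm_smul_normalize y, inner_smul_right_eq_smul, norm_smul,
    norm_norm, mul_pow]
  rfl

end GeneralLemmas

section Spectra

/-- A set of naturals has bounded differences if every positive integer is a difference of two of
its elements in at most `C` ways, for some uniform `C`. -/
def HasBoundedDifferences (Λ : Set ℕ) : Prop :=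
  ∃ C : ℕ, ∀ r, 0 < r → {n | n ∈ Λ ∧ n + r ∈ Λ}.encard ≤ C

theorem HasBoundedDifferences.mono {Λ Λ' : Set ℕ} (h : HasBoundedDifferences Λ) (hsub : Λ' ⊆ Λ) :
    HasBoundedDifferences Λ' :=
  h.imp fun _ hC r hr => (Set.encard_le_encard <| Set.ofPred_subset_ofPred.2 fun _ =>
    And.imp (@hsub _) (@hsub _)).trans (hC r hr)

theorem HasBoundedDifferences.eventually_add_lt {Λ : Set ℕ} (h : HasBoundedDifferences Λ) (m : ℕ) :
    ∀ᶠ n in atTop, n ∈ Λ → ∀ k ∈ Λ, k < n → k + m < n := by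
  obtain ⟨C, hC⟩ := h
  have hfin : (⋃ r ∈ Set.Icc 1 m, (· + r) '' {k | k ∈ Λ ∧ k + r ∈ Λ}).Finite :=
    (Set.finite_Icc 1 m).biUnion fun r hr => (Set.finite_of_encard_le_coe (hC r hr.1)).image _
  rw [← Nat.cofinite_eq_atTop]
  filter_upwards [hfin.compl_mem_cofinite] with n hn hnΛ k hk hkn
  by_contra! hle
  refine hn (Set.mem_iUnion₂.2 ⟨n - k, Set.mem_Icc.2 (by omega), k, ⟨hk, ?_⟩, ?_⟩) <;>
    simp [Nat.add_sub_cancel' hkn.le, hnΛ]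

theorem mul_pow_card_le_of_lacunary {d : ℝ} (hd : 0 ≤ d) {a : ℝ} {S : Finset ℕ}
    (hS : ∀ m ∈ S, ∀ n ∈ S, m < n → d * m ≤ n) {b : ℝ} (hab : ∀ n ∈ S, a ≤ n ∧ n ≤ b)
    (hne : S.Nonempty) : a * d ^ S.card ≤ d * b := by
  induction S using Finset.induction_on_max generalizing b with
  | empty => exact absurd hne Finset.not_nonempty_empty
  | insert x s hx ih =>
    rw [Finset.card_insert_of_notMem fun h => (hx x h).false, pow_succ']
    obtain ⟨hax, hxb⟩ := hab x (Finset.mem_insert_self x s)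
    suffices a * d ^ s.card ≤ x by nlinarith
    rcases s.eq_empty_or_nonempty with rfl | hs
    · simp [hax]
    · have hmax := hS _ (Finset.mem_insert_of_mem (s.max'_mem hs)) _ (Finset.mem_insert_self x s)
        (hx _ (s.max'_mem hs))
      refine (ih (fun m hm n hn => hS m (Finset.mem_insert_of_mem hm) n
        (Finset.mem_insert_of_mem hn)) (fun n hn => ⟨(hab n (Finset.mem_insert_of_mem hn)).1, ?_⟩)
        hs).trans hmax
      exact_mod_cast s.le_max' n hn

theorem HadLac.hasBoundedDifferences {Λ : Set ℕ} (h : HadLac Λ) : HasBoundedDifferences Λ := by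
  obtain ⟨d, hd, hΛ⟩ := h
  have hd' : 0 < d - 1 := sub_pos.2 hd
  obtain ⟨N, hN⟩ := pow_unbounded_of_one_lt (d * (d / (d - 1))) hd
  refine ⟨N, fun r hr => ?_⟩
  have hr' : (0 : ℝ) < r := Nat.cast_pos.2 hr
  have hle : ∀ n ∈ {n | n ∈ Λ ∧ n + r ∈ Λ}, (n : ℝ) ≤ r / (d - 1) := by
    rintro n ⟨hn, hnr⟩
    have := hΛ n hn _ hnr (Nat.lt_add_of_pos_right hr)
    push_cast at this
    rw [le_div_iff₀ hd']
    linarith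
  have hfin : {n | n ∈ Λ ∧ n + r ∈ Λ}.Finite :=
    (Set.finite_Iic ⌊r / (d - 1)⌋₊).subset fun n hn => Nat.le_floor (hle n hn)
  rw [← hfin.coe_toFinset, Set.encard_coe_eq_coe_finsetCard, Nat.cast_le]
  rcases hfin.toFinset.eq_empty_or_nonempty with hempty | hne
  · simp [hempty]
  set S := hfin.toFinset.map (addRightEmbedding r) with hS
  have hcard : (r : ℝ) * d ^ S.card ≤ d * (r * (d / (d - 1))) := by
    refine mul_pow_card_le_of_lacunary (zero_le_one.trans hd.le) ?_ ?_ (hne.map)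
    · simp only [hS, Finset.forall_mem_map, Set.Finite.mem_toFinset]
      exact fun m hm n hn => hΛ _ hm.2 _ hn.2
    · simp only [hS, Finset.forall_mem_map, Set.Finite.mem_toFinset, addRightEmbedding_apply]
      intro n hn
      push_cast
      refine ⟨le_add_of_nonneg_left n.cast_nonneg, ?_⟩
      calc (n : ℝ) + r ≤ r / (d - 1) + r := by gcongr; exact hle n hn
        _ = r * (d / (d - 1)) := by field_simp; ring
  rw [mul_left_comm, mul_le_mul_iff_right₀ hr', Finset.card_map] at hcard
  exact ((pow_lt_pow_iff_right₀ hd).1 (hcard.trans_lt hN)).le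

end Spectra

namespace H2

variable {Y : Type*} [NormedAddCommGroup Y] [InnerProductSpace ℂ Y]

theorem bshift_iterate_apply (f : H2 X) (n k : ℕ) : (bshift^[n] f) k = f (k + n) := by
  induction n generalizing f with
  | zero => rfl
  | succ n ih =>
    rw [Function.iterate_succ_apply, ih]
    rfl

theorem hasSum_norm_sq (f : H2 X) : HasSum (fun n => ‖f n‖ ^ 2) (‖f‖ ^ 2) := by
  have := lp.hasSum_norm (p := 2) (by norm_num) f
  simpa only [ENNReal.toReal_ofNat, Real.rpow_ofNat] using this

theorem inner_eq_sum_add_inner_bshift (f g : H2 X) (n : ℕ) :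
    ⟪f, g⟫_ℂ = ∑ i ∈ Finset.range n, ⟪f i, g i⟫_ℂ + ⟪bshift^[n] f, bshift^[n] g⟫_ℂ := by
  rw [lp.inner_eq_tsum f g, lp.inner_eq_tsum (bshift^[n] f),
    ← (lp.summable_inner (𝕜 := ℂ) f g).sum_add_tsum_nat_add n]
  simp only [bshift_iterate_apply]

theorem norm_sq_eq_add_norm_bshift_sq (f : H2 X) : ‖f‖ ^ 2 = ‖f 0‖ ^ 2 + ‖bshift f‖ ^ 2 := by
  rw [← (hasSum_norm_sq f).tsum_eq, (hasSum_norm_sq f).summable.tsum_eq_zero_add]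
  exact congrArg _ (hasSum_norm_sq (bshift f)).tsum_eq

theorem tendsto_norm_bshift_iterate_sq (f : H2 X) :
    Tendsto (fun n => ‖bshift^[n] f‖ ^ 2) atTop (𝓝 0) := by
  refine (tendsto_sum_nat_add fun n => ‖f n‖ ^ 2).congr fun n => ?_
  rw [← (hasSum_norm_sq (bshift^[n] f)).tsum_eq]
  simp only [bshift_iterate_apply]

theorem norm_inner_sq_le_tsum_indicator (f g : H2 X) :
    ‖⟪f, g⟫_ℂ‖ ^ 2 ≤ (∑' i, (spec g).indicator (fun i => ‖f i‖ ^ 2) i) * ‖g‖ ^ 2 := by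
  let f' : H2 X :=
    ⟨(spec g).indicator f, (lp.memℓp f).mono' fun _ => norm_indicator_le_norm_self _ _⟩
  have hf' : ∀ i, f' i = (spec g).indicator f i := fun i => rfl
  have hinner : ⟪f, g⟫_ℂ = ⟪f', g⟫_ℂ := by
    rw [lp.inner_eq_tsum, lp.inner_eq_tsum]
    refine tsum_congr fun i => ?_
    by_cases hi : g i = 0
    · simp [hi]
    · rw [hf', Set.indicator_of_mem hi]
  have hnorm : ‖f'‖ ^ 2 = ∑' i, (spec g).indicator (fun i => ‖f i‖ ^ 2) i := by
    rw [← (hasSum_norm_sq f').tsum_eq]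
    refine tsum_congr fun i => ?_
    by_cases hi : i ∈ spec g <;> simp [hf', hi]
  rw [hinner, ← hnorm, ← mul_pow]
  exact pow_le_pow_left₀ (norm_nonneg _) (norm_inner_le_norm _ _) 2

/-- The operator `f ↦ A ∘ f` on Hardy spaces induced by a bounded operator `A` between the
coefficient spaces. -/
def coeffMap (A : X →L[ℂ] Y) : H2 X →L[ℂ] H2 Y :=
  lp.mapCLM 2 (fun _ => A) (norm_nonneg A) fun _ => le_rfl

theorem coeffMap_apply (A : X →L[ℂ] Y) (f : H2 X) (n : ℕ) : coeffMap A f n = A (f n) :=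
  rfl

theorem bshift_iterate_coeffMap (A : X →L[ℂ] Y) (f : H2 X) (n : ℕ) :
    bshift^[n] (coeffMap A f) = coeffMap A (bshift^[n] f) := by
  ext k
  simp only [bshift_iterate_apply, coeffMap_apply]

theorem inner_coeffMap_right [CompleteSpace X] [CompleteSpace Y] (A : X →L[ℂ] Y) (g : H2 Y)
    (f : H2 X) : ⟪g, coeffMap A f⟫_ℂ = ⟪coeffMap (ContinuousLinearMap.adjoint A) g, f⟫_ℂ := by
  simp only [lp.inner_eq_tsum, coeffMap_apply, ContinuousLinearMap.adjoint_inner_left]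

theorem spec_coeffMap_subset (A : X →L[ℂ] Y) (f : H2 X) : spec (coeffMap A f) ⊆ spec f :=
  fun n hn h0 => hn (by rw [coeffMap_apply, h0, map_zero])

theorem coeffMap_starProjection_add_orthogonal (K : Submodule ℂ X) [K.HasOrthogonalProjection]
    (f : H2 X) : coeffMap K.starProjection f + coeffMap Kᗮ.starProjection f = f := by
  ext n
  exact K.starProjection_add_starProjection_orthogonal (f n)

theorem bshift_iterate_mem_Ef (f : H2 X) (n : ℕ) : bshift^[n] f ∈ Ef f :=
  Submodule.le_topologicalClosure _ (Submodule.subset_span ⟨f, rfl, n, rfl⟩)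

theorem isClosed_Ef (f : H2 X) : IsClosed (Ef f : Set (H2 X)) :=
  Submodule.isClosed_topologicalClosure _

theorem Ef_le {f : H2 X} {M : Submodule ℂ (H2 X)} (hM : IsClosed (M : Set (H2 X)))
    (h : ∀ n, bshift^[n] f ∈ M) : Ef f ≤ M := by
  refine Submodule.topologicalClosure_minimal _ (Submodule.span_le.2 ?_) hM
  rintro _ ⟨g, rfl, n, rfl⟩
  exact h n

theorem coeffMap_mem_Ef (A : X →L[ℂ] Y) {f g : H2 X} (hg : g ∈ Ef f) :
    coeffMap A g ∈ Ef (coeffMap A f) := by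
  suffices Ef f ≤ (Ef (coeffMap A f)).comap (coeffMap A).toLinearMap from this hg
  refine Ef_le ((isClosed_Ef _).preimage (coeffMap A).continuous) fun n => ?_
  rw [Submodule.mem_comap, ContinuousLinearMap.coe_coe, ← bshift_iterate_coeffMap]
  exact bshift_iterate_mem_Ef _ n

theorem coeffMap_starProjection_mem_H2sub (K : Submodule ℂ X) [K.HasOrthogonalProjection]
    (f : H2 X) : coeffMap K.starProjection f ∈ H2sub K :=
  fun n => K.starProjection_apply_mem (f n)

theorem inner_eq_zero_of_mem_H2sub_orthogonal {K : Submodule ℂ X} {g h : H2 X} (hg : g ∈ H2sub K)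
    (hh : h ∈ H2sub Kᗮ) : ⟪g, h⟫_ℂ = 0 := by
  rw [lp.inner_eq_tsum]
  simp only [Submodule.inner_right_of_mem_orthogonal (hg _) (hh _), tsum_zero]

theorem bshift_iterate_mem_H2sub {K : Submodule ℂ X} {g : H2 X} (hg : g ∈ H2sub K) (n : ℕ) :
    bshift^[n] g ∈ H2sub K := fun k => by
  rw [bshift_iterate_apply]
  exact hg (k + n)

theorem isClosed_H2sub {K : Submodule ℂ X} (hK : IsClosed (K : Set X)) :
    IsClosed (H2sub K : Set (H2 X)) := by
  have : (H2sub K : Set (H2 X)) = ⋂ n, lp.evalCLM ℂ (fun _ : ℕ => X) 2 n ⁻¹' K := by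
    ext g
    simp only [Set.mem_iInter]
    rfl
  rw [this]
  exact isClosed_iInter fun n => hK.preimage (ContinuousLinearMap.continuous _)

theorem Ef_eq_H2sub_sup_Ef {f : H2 X} {K : Submodule ℂ X} [K.HasOrthogonalProjection]
    (hK : H2sub K ≤ Ef f) : Ef f = H2sub K ⊔ Ef (coeffMap Kᗮ.starProjection f) := by
  refine le_antisymm (fun g hg => ?_) (sup_le hK (Ef_le (isClosed_Ef f) fun n => ?_))
  · rw [← coeffMap_starProjection_add_orthogonal K g]
    exact Submodule.add_mem_sup (coeffMap_starProjection_mem_H2sub K g) (coeffMap_mem_Ef _ hg)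
  · rw [bshift_iterate_coeffMap, eq_sub_of_add_eq' (coeffMap_starProjection_add_orthogonal K _)]
    exact sub_mem (bshift_iterate_mem_Ef f n) (hK (coeffMap_starProjection_mem_H2sub K _))

end H2

section Directions

/-- The set of directions `aₖ / ‖aₖ‖` of the nonzero terms of `a`. Complete relative compactness of
`a` says that `directions (P ∘ a)` is relatively compact for every orthogonal projection `P`. -/
def directions (a : ℕ → X) : Set X := {v | ∃ k, a k ≠ 0 ∧ v = ‖a k‖⁻¹ • a k}

theorem norm_eq_one_of_mem_closure_directions {a : ℕ → X} {v : X}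
    (hv : v ∈ closure (directions a)) : ‖v‖ = 1 := by
  refine closure_minimal ?_ (isClosed_eq continuous_norm continuous_const) hv
  rintro _ ⟨k, hk, rfl⟩
  exact NormedSpace.norm_normalize hk

theorem closure_directions_subset {a : ℕ → X} {M : Submodule ℂ X} (hM : IsClosed (M : Set X))
    (ha : ∀ k, a k ∈ M) : closure (directions a) ⊆ M := by
  refine closure_minimal ?_ hM
  rintro _ ⟨k, -, rfl⟩
  exact M.smul_of_tower_mem _ (ha k)

theorem CRC.isCompact_closure_directions {f : H2 X} (hf : CRC fun k => f k) (K : Submodule ℂ X)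
    [K.HasOrthogonalProjection] :
    IsCompact (closure (directions (H2.coeffMap K.starProjection f))) :=
  hf K.starProjection ⟨fun x => K.starProjection_eq_self_iff.2 (K.starProjection_apply_mem x),
    K.inner_starProjection_left_eq_right⟩

end Directions

section Annihilator

open H2

/-- The linear span in `X` of all Taylor coefficients of functions in `M`. -/
def coeffSpan (M : Submodule ℂ (H2 X)) : Submodule ℂ X :=
  Submodule.span ℂ {x | ∃ g ∈ M, ∃ m, x = g m}

theorem coeff_mem_coeffSpan {M : Submodule ℂ (H2 X)} {g : H2 X} (hg : g ∈ M) (m : ℕ) :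
    g m ∈ coeffSpan M :=
  Submodule.subset_span ⟨g, hg, m, rfl⟩

theorem coeffSpan_mono {M N : Submodule ℂ (H2 X)} (h : M ≤ N) : coeffSpan M ≤ coeffSpan N :=
  Submodule.span_mono fun _ ⟨g, hg, m, hx⟩ => ⟨g, h hg, m, hx⟩

theorem norm_inner_coeff_sq_le {b g : H2 X} (hg : g ∈ (Ef b)ᗮ) {m n : ℕ} (hmn : m ≤ n)
    (hgap : ∀ k ∈ spec b, k < n → k + m < n) :
    ‖⟪g m, b n⟫_ℂ‖ ^ 2 ≤ (∑' r, (spec (bshift^[n + 1] b)).indicator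
      (fun r => ‖bshift^[m + 1] g r‖ ^ 2) r) * ‖bshift^[n + 1] b‖ ^ 2 := by
  have horth : ⟪g, bshift^[n - m] b⟫_ℂ = 0 :=
    Submodule.inner_left_of_mem_orthogonal (bshift_iterate_mem_Ef b _) hg
  have hgap' : ∀ i < m, b (i + (n - m)) = 0 := fun i hi => by
    by_contra hne
    have := hgap _ hne (by omega)
    omega
  rw [inner_eq_sum_add_inner_bshift _ _ (m + 1), Finset.sum_range_succ,
    Finset.sum_eq_zero fun i hi => by
      rw [bshift_iterate_apply, hgap' i (Finset.mem_range.1 hi), inner_zero_right],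
    zero_add, bshift_iterate_apply, Nat.add_sub_cancel' hmn, ← Function.iterate_add_apply,
    show m + 1 + (n - m) = n + 1 by omega] at horth
  rw [eq_neg_of_add_eq_zero_left horth, norm_neg]
  exact norm_inner_sq_le_tsum_indicator _ _

theorem summable_norm_inner_coeff_sq_div {b g : H2 X} (hb : HasBoundedDifferences (spec b))
    (hg : g ∈ (Ef b)ᗮ) (m : ℕ) :
    Summable fun n => ‖⟪g m, b n⟫_ℂ‖ ^ 2 / ‖bshift^[n + 1] b‖ ^ 2 := by
  let R : Set (ℕ × ℕ) := {q | q.2 ∈ spec b ∧ q.2 + (q.1 + 1) ∈ spec b}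
  let w : ℕ → ℝ := fun r => ‖bshift^[m + 1] g r‖ ^ 2
  have hw : ∀ r, 0 ≤ w r := fun r => sq_nonneg _
  have hR : Summable fun n => ∑' r, R.indicator (fun q => w q.1) (r, n) := by
    obtain ⟨C, hC⟩ := hb
    exact (summable_indicator_fst_of_encard_le (R := R) (fun r => hC (r + 1) r.succ_pos) hw
      (hasSum_norm_sq _).summable).prod_symm.prod
  refine hR.of_norm_bounded_eventually_nat ?_
  filter_upwards [eventually_ge_atTop m, hb.eventually_add_lt m] with n hmn hgap
  rw [Real.norm_of_nonneg (by positivity)]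
  by_cases hn : b n = 0
  · simpa [hn] using tsum_nonneg fun r => Set.indicator_nonneg (fun q _ => hw q.1) _
  refine div_le_of_le_mul₀ (sq_nonneg _)
    (tsum_nonneg fun r => Set.indicator_nonneg (fun q _ => hw q.1) _) ?_
  have hfiber : spec (bshift^[n + 1] b) = (fun r => (r, n)) ⁻¹' R := by
    ext r
    simp only [R, spec, Set.mem_preimage, Set.mem_ofPred_eq, bshift_iterate_apply, ne_eq, hn,
      not_false_eq_true, true_and, show n + (r + 1) = r + (n + 1) by omega]
  have hle := norm_inner_coeff_sq_le hg hmn (hgap hn)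
  rw [hfiber] at hle
  exact hle

theorem bshift_iterate_ne_zero {b : H2 X} (hb : ¬ PolyH2 b) (n : ℕ) : bshift^[n] b ≠ 0 := by
  intro h0
  refine hb ((Set.finite_Iio n).subset fun k hk => ?_)
  by_contra! hnk
  refine hk ?_
  rw [← Nat.sub_add_cancel (not_lt.1 hnk), ← bshift_iterate_apply, h0]
  rfl

theorem exists_mem_closure_directions_coeffSpan_orthogonal {b : H2 X}
    (hb : HasBoundedDifferences (spec b)) (hcomp : IsCompact (closure (directions b)))
    (hpoly : ¬ PolyH2 b) :
    ∃ v ∈ closure (directions b), v ∈ (coeffSpan (Ef b)ᗮ)ᗮ := by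
  set T : ℕ → ℝ := fun n => ‖bshift^[n] b‖ ^ 2
  have hT : ∀ n, T n ≠ 0 := fun n => by simpa [T] using bshift_iterate_ne_zero hpoly n
  have hdiff : ∀ n, T n - T (n + 1) = ‖b n‖ ^ 2 := fun n => by
    simp only [T, norm_sq_eq_add_norm_bshift_sq (bshift^[n] b), bshift_iterate_apply, zero_add,
      Function.iterate_succ_apply', add_sub_cancel_right]
  obtain ⟨v, hv, hvanish⟩ := exists_mem_forall_apply_eq_zero_of_not_summable hcomp
    (u := fun n => ‖b n‖⁻¹ • b n) (δ := fun n => ‖b n‖ ^ 2 / T (n + 1))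
    (fun n => by positivity)
    (fun h => not_summable_sub_div_succ_of_tendsto_zero hT (tendsto_norm_bshift_iterate_sq b)
      (by simpa only [hdiff] using h.norm))
    (fun n hn => subset_closure ⟨n, fun h0 => hn (by simp [h0]), rfl⟩)
  have hcoeff : coeffSpan (Ef b)ᗮ ≤ (ℂ ∙ v)ᗮ := by
    refine Submodule.span_le.2 ?_
    rintro _ ⟨g, hg, m, rfl⟩
    have hsum : Summable fun n => ‖b n‖ ^ 2 / T (n + 1) * ‖⟪g m, ‖b n‖⁻¹ • b n⟫_ℂ‖ ^ 2 := by
      simpa only [div_mul_eq_mul_div, norm_sq_mul_norm_inner_normalize_sq] using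
        summable_norm_inner_coeff_sq_div hb hg m
    have hgv := hvanish (fun x => ‖⟪g m, x⟫_ℂ‖ ^ 2) (by fun_prop) (fun _ => sq_nonneg _) hsum
    exact Submodule.mem_orthogonal_singleton_iff_inner_left.2
      (norm_eq_zero.1 (pow_eq_zero_iff two_ne_zero |>.1 hgv))
  exact ⟨v, hv, fun x hx => Submodule.mem_orthogonal_singleton_iff_inner_left.1 (hcoeff hx)⟩

theorem polyH2_of_coeff_mem_closure_coeffSpan {b : H2 X} (hb : HasBoundedDifferences (spec b))
    (hcomp : IsCompact (closure (directions b)))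
    (hmem : ∀ k, b k ∈ (coeffSpan (Ef b)ᗮ).topologicalClosure) : PolyH2 b := by
  by_contra hpoly
  obtain ⟨v, hv, hvorth⟩ := exists_mem_closure_directions_coeffSpan_orthogonal hb hcomp hpoly
  have hvmem := closure_directions_subset (Submodule.isClosed_topologicalClosure _) hmem hv
  rw [← Submodule.orthogonal_closure] at hvorth
  have hv0 : v = 0 := inner_self_eq_zero.1 (Submodule.inner_right_of_mem_orthogonal hvmem hvorth)
  simpa [hv0] using norm_eq_one_of_mem_closure_directions hv

end Annihilator

section Xstar

/-- The closed linear span of the Taylor coefficients `f̂(k)`, `k ≥ m`; these decrease to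
`Xstar f` as `m → ∞`. -/
def tailSpan (f : H2 X) (m : ℕ) : Submodule ℂ X :=
  (Submodule.span ℂ (f '' Set.Ici m)).topologicalClosure

theorem isClosed_tailSpan (f : H2 X) (m : ℕ) : IsClosed (tailSpan f m : Set X) :=
  Submodule.isClosed_topologicalClosure _

theorem coeff_mem_tailSpan (f : H2 X) {m k : ℕ} (hmk : m ≤ k) : f k ∈ tailSpan f m :=
  Submodule.le_topologicalClosure _ (Submodule.subset_span ⟨k, hmk, rfl⟩)

theorem Xstar_eq_iInf_tailSpan (f : H2 X) : Xstar f = ⨅ m, tailSpan f m := by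
  refine iInf_congr fun m => congrArg (fun s => (Submodule.span ℂ s).topologicalClosure) ?_
  ext x
  constructor
  · rintro ⟨_, rfl, k, hk, rfl⟩
    exact ⟨k, hk, rfl⟩
  · rintro ⟨k, hk, rfl⟩
    exact ⟨f, rfl, k, hk, rfl⟩

theorem isClosed_Xstar (f : H2 X) : IsClosed (Xstar f : Set X) := by
  rw [Xstar_eq_iInf_tailSpan, Submodule.coe_iInf]
  exact isClosed_iInter (isClosed_tailSpan f)

theorem Xstar_le_of_eventually_mem {f : H2 X} {M : Submodule ℂ X} (hM : IsClosed (M : Set X))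
    (h : ∀ᶠ k in atTop, f k ∈ M) : Xstar f ≤ M := by
  obtain ⟨m, hm⟩ := eventually_atTop.1 h
  rw [Xstar_eq_iInf_tailSpan]
  refine (iInf_le _ m).trans (Submodule.topologicalClosure_minimal _ (Submodule.span_le.2 ?_) hM)
  rintro _ ⟨k, hk, rfl⟩
  exact hm k hk

open H2

theorem polyH2_coeffMap_Xstar_orthogonal {f : H2 X} (hcrc : CRC fun k => f k)
    [(Xstar f).HasOrthogonalProjection] : PolyH2 (coeffMap (Xstar f)ᗮ.starProjection f) := by
  set p := coeffMap (Xstar f)ᗮ.starProjection f with hp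
  by_contra hpoly
  obtain ⟨v, hv, hcluster⟩ := (hcrc.isCompact_closure_directions (Xstar f)ᗮ)
    |>.exists_mapClusterPt_of_frequently (f := fun n => ‖p n‖⁻¹ • p n) (l := atTop)
    ((Nat.frequently_atTop_iff_infinite.2 hpoly).mono fun n hn => subset_closure ⟨n, hn, rfl⟩)
  have hvX : v ∈ Xstar f := by
    rw [Xstar_eq_iInf_tailSpan, Submodule.mem_iInf]
    refine fun m => (isClosed_tailSpan f m).mem_of_mapClusterPt hcluster ?_
    filter_upwards [eventually_ge_atTop m] with n hn
    refine (tailSpan f m).smul_of_tower_mem _ ?_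
    rw [hp, coeffMap_apply, Submodule.starProjection_orthogonal_val]
    refine sub_mem (coeff_mem_tailSpan f hn) (?_ : _ ∈ tailSpan f m)
    exact (Xstar_eq_iInf_tailSpan f).le.trans (iInf_le _ m) (Submodule.starProjection_apply_mem _ _)
  have hvX' : v ∈ (Xstar f)ᗮ := closure_directions_subset (Submodule.isClosed_orthogonal _)
    (coeffMap_starProjection_mem_H2sub _ f) hv
  have hv0 : v = 0 := inner_self_eq_zero.1 (Submodule.inner_right_of_mem_orthogonal hvX hvX')
  simpa [hv0] using norm_eq_one_of_mem_closure_directions hv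

variable [CompleteSpace X]

theorem Ef_orthogonal_le_Ef_coeffMap_orthogonal (f : H2 X) {K : Submodule ℂ X}
    [K.HasOrthogonalProjection] (hK : coeffSpan (Ef f)ᗮ ≤ K) :
    (Ef f)ᗮ ≤ (Ef (coeffMap K.starProjection f))ᗮ := by
  intro g hg
  suffices Ef (coeffMap K.starProjection f) ≤ (ℂ ∙ g)ᗮ from fun h hh =>
    Submodule.mem_orthogonal_singleton_iff_inner_left.1 (this hh)
  refine Ef_le (Submodule.isClosed_orthogonal _) fun n => ?_
  have hgK : coeffMap K.starProjection g = g := by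
    ext m
    exact K.starProjection_eq_self_iff.2 (hK (coeff_mem_coeffSpan hg m))
  rw [Submodule.mem_orthogonal_singleton_iff_inner_right, bshift_iterate_coeffMap,
    inner_coeffMap_right, ← ContinuousLinearMap.star_eq_adjoint,
    (isSelfAdjoint_starProjection K).star_eq, hgK]
  exact Submodule.inner_left_of_mem_orthogonal (bshift_iterate_mem_Ef f n) hg

theorem H2sub_Xstar_le_Ef {f : H2 X} (hf : HasBoundedDifferences (spec f))
    (hcrc : CRC fun k => f k) : H2sub (Xstar f) ≤ Ef f := by
  set V := coeffSpan (Ef f)ᗮ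
  have hcoeff := Ef_orthogonal_le_Ef_coeffMap_orthogonal f V.le_topologicalClosure
  set b := coeffMap V.topologicalClosure.starProjection f
  have hpoly : PolyH2 b := polyH2_of_coeff_mem_closure_coeffSpan
    (hf.mono (spec_coeffMap_subset _ f)) (hcrc.isCompact_closure_directions _) fun k =>
      Submodule.topologicalClosure_mono (coeffSpan_mono hcoeff)
        (coeffMap_starProjection_mem_H2sub _ f k)
  have hX : Xstar f ≤ Vᗮ := by
    refine Xstar_le_of_eventually_mem (Submodule.isClosed_orthogonal V) ?_
    filter_upwards [Nat.cofinite_eq_atTop ▸ hpoly.compl_mem_cofinite] with k hk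
    rw [← Submodule.orthogonal_closure]
    exact (Submodule.starProjection_apply_eq_zero_iff _).1 (not_not.1 hk)
  have hEf : (Ef f)ᗮᗮ = Ef f := by
    rw [Submodule.orthogonal_orthogonal_eq_closure, (isClosed_Ef f).submodule_topologicalClosure_eq]
  rw [← hEf]
  exact fun g hg h hh => inner_eq_zero_symm.1 <| inner_eq_zero_of_mem_H2sub_orthogonal hg fun n =>
    Submodule.orthogonal_le hX (V.le_orthogonal_orthogonal (coeff_mem_coeffSpan hh n))

end Xstar

theorem Ef_eq_H2sub_Xstar_sup_Ef_poly_general {X : Type*} [NormedAddCommGroup X]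
    [InnerProductSpace ℂ X] [CompleteSpace X]
    (f : H2 X) (hf : HasBoundedDifferences (spec f)) (hcrc : CRC fun k : ℕ => f k) :
    ∃ p : H2 X,
      f - p ∈ H2sub (Xstar f) ∧
      (∀ g ∈ H2sub (Xstar f), ⟪p, g⟫_ℂ = 0) ∧
      PolyH2 p ∧
      Ef f = H2sub (Xstar f) ⊔ Ef p ∧
      ∀ g ∈ H2sub (Xstar f), ∀ h ∈ Ef p, ⟪g, h⟫_ℂ = 0 := by
  have : CompleteSpace (Xstar f) := (isClosed_Xstar f).completeSpace_coe
  set p := H2.coeffMap (Xstar f)ᗮ.starProjection f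
  have hfp : f - p ∈ H2sub (Xstar f) := by
    rw [← eq_sub_of_add_eq (H2.coeffMap_starProjection_add_orthogonal (Xstar f) f)]
    exact H2.coeffMap_starProjection_mem_H2sub _ f
  have hp : p ∈ H2sub (Xstar f)ᗮ := H2.coeffMap_starProjection_mem_H2sub _ f
  have hEp : Ef p ≤ H2sub (Xstar f)ᗮ := H2.Ef_le
    (H2.isClosed_H2sub (Submodule.isClosed_orthogonal _)) (H2.bshift_iterate_mem_H2sub hp)
  exact ⟨p, hfp,
    fun g hg => inner_eq_zero_symm.1 (H2.inner_eq_zero_of_mem_H2sub_orthogonal hg hp),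
    polyH2_coeffMap_Xstar_orthogonal hcrc, H2.Ef_eq_H2sub_sup_Ef (H2sub_Xstar_le_Ef hf hcrc),
    fun g hg h hh => H2.inner_eq_zero_of_mem_H2sub_orthogonal hg (hEp hh)⟩

/-- A lacunary series `f ∈ H²(𝔻, X)` with completely relatively compact coefficient sequence
generates the `S*`-invariant subspace `E_f = H²(𝔻, X_*(f)) ⊕ E_p`, an orthogonal direct sum,
where `p = f − P_{H²(𝔻, X_*(f))} f` is a polynomial. -/
theorem Ef_eq_H2sub_Xstar_sup_Ef_poly {X : Type*} [NormedAddCommGroup X] [InnerProductSpace ℂ X] [CompleteSpace X]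
    [TopologicalSpace.SeparableSpace X]
    (f : H2 X) (hlac : HadLac (spec f)) (hcrc : CRC fun k : ℕ => f k) :
    ∃ p : H2 X,
      f - p ∈ H2sub (Xstar f) ∧
      (∀ g ∈ H2sub (Xstar f), ⟪p, g⟫_ℂ = 0) ∧
      PolyH2 p ∧
      Ef f = H2sub (Xstar f) ⊔ Ef p ∧
      ∀ g ∈ H2sub (Xstar f), ∀ h ∈ Ef p, ⟪g, h⟫_ℂ = 0 := by
  exact Ef_eq_H2sub_Xstar_sup_Ef_poly_general f hlac.hasBoundedDifferences hcrc

end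
end

section
/- Let (n_k)_{k≥1} be a Hadamard lacunary sequence of nonnegative integers, with n_{k+1} ≥ d·n_k for all k ≥ 1 and some d > 1. Then there exists a number M such that for every integer I, the number of pairs (j, k) with j > k and n_j − n_k = I is at most M. -/
/-!
If `n_j = n_k + I` with `j > k`, then `d (n_j - I) = d n_k ≤ n_{k+1} ≤ n_j`, so that
`I ≤ n_j ≤ d / (d - 1) * I`. A window `[I, d ^ m * I)` contains at most `m` terms of the sequence,
and `j` determines `k`; so any `m` with `d / (d - 1) < d ^ m` bounds the number of representations
of every `I`.
-/

section Semiring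

variable {R : Type*} [Semiring R] [PartialOrder R] [IsOrderedRing R] {a : ℕ → R} {d : R}

lemma pow_mul_le_add_of_mul_le_succ (hd : 0 ≤ d) (hlac : ∀ k, d * a k ≤ a (k + 1)) (k i : ℕ) :
    d ^ i * a k ≤ a (k + i) := by
  induction i with
  | zero => simp
  | succ i ih =>
    calc d ^ (i + 1) * a k = d * (d ^ i * a k) := by rw [pow_succ', mul_assoc]
      _ ≤ d * a (k + i) := mul_le_mul_of_nonneg_left ih hd
      _ ≤ a (k + (i + 1)) := hlac (k + i)

lemma encard_preimage_Ico_pow_mul_le (hd : 0 ≤ d) (hmono : Monotone a)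
    (hlac : ∀ k, d * a k ≤ a (k + 1)) (x : R) (m : ℕ) :
    (a ⁻¹' Set.Ico x (d ^ m * x)).encard ≤ m := by
  set s := a ⁻¹' Set.Ico x (d ^ m * x)
  have hsub : s ⊆ Finset.Ico (sInf s) (sInf s + m) := by
    intro j hj
    have hmin : sInf s ∈ s := Nat.sInf_mem ⟨j, hj⟩
    have hlt : j < sInf s + m := by
      by_contra! hle
      refine hj.2.not_ge ?_
      calc d ^ m * x ≤ d ^ m * a (sInf s) := mul_le_mul_of_nonneg_left hmin.1 (pow_nonneg hd m)
        _ ≤ a (sInf s + m) := pow_mul_le_add_of_mul_le_succ hd hlac _ m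
        _ ≤ a j := hmono hle
    exact Finset.mem_coe.2 (Finset.mem_Ico.2 ⟨Nat.sInf_le hj, hlt⟩)
  calc s.encard ≤ (Finset.Ico (sInf s) (sInf s + m) : Set ℕ).encard := Set.encard_le_encard hsub
    _ = m := by rw [Set.encard_coe_eq_coe_finsetCard, Nat.card_Ico, Nat.add_sub_cancel_left]

end Semiring

lemma injOn_fst_setOf_eq_add {ι G : Type*} [Add G] [IsRightCancelAdd G] {a : ι → G}
    (ha : Function.Injective a) (x : G) :
    Set.InjOn Prod.fst {p : ι × ι | a p.1 = a p.2 + x} := by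
  rintro ⟨j, k⟩ hk ⟨_, l⟩ hl rfl
  have hkl : a k + x = a l + x := hk.symm.trans hl
  rw [ha (add_right_cancel hkl)]

section Ring

variable {R : Type*} [CommRing R] [LinearOrder R] [IsStrictOrderedRing R] {a : ℕ → R} {d x : R}

lemma sub_one_mul_le_of_eq_add (hmono : Monotone a) (hlac : ∀ k, d * a k ≤ a (k + 1))
    {j k : ℕ} (hkj : k < j) (hx : a j = a k + x) : (d - 1) * a j ≤ d * x := by
  have hgap : d * a k ≤ a j := (hlac k).trans (hmono hkj)
  calc (d - 1) * a j = d * a k + d * x - a j := by rw [hx]; ring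
    _ ≤ d * x := by linarith

lemma mem_Ico_pow_mul_of_eq_add (hd : 1 < d) (hmono : StrictMono a) (hnonneg : 0 ≤ a 0)
    (hlac : ∀ k, d * a k ≤ a (k + 1)) {m : ℕ} (hm : d < (d - 1) * d ^ m)
    {j k : ℕ} (hkj : k < j) (hx : a j = a k + x) : a j ∈ Set.Ico x (d ^ m * x) := by
  have hk : 0 ≤ a k := hnonneg.trans (hmono.monotone k.zero_le)
  have hxpos : 0 < x := by linarith [hmono hkj]
  have hlt : (d - 1) * a j < (d - 1) * (d ^ m * x) :=
    calc (d - 1) * a j ≤ d * x := sub_one_mul_le_of_eq_add hmono.monotone hlac hkj hx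
      _ < (d - 1) * d ^ m * x := mul_lt_mul_of_pos_right hm hxpos
      _ = (d - 1) * (d ^ m * x) := mul_assoc _ _ _
  exact ⟨by linarith, lt_of_mul_lt_mul_left hlt (sub_pos.2 hd).le⟩

lemma encard_setOf_eq_add_le (hd : 1 < d) (hmono : StrictMono a) (hnonneg : 0 ≤ a 0)
    (hlac : ∀ k, d * a k ≤ a (k + 1)) {m : ℕ} (hm : d < (d - 1) * d ^ m) (x : R) :
    {p : ℕ × ℕ | p.2 < p.1 ∧ a p.1 = a p.2 + x}.encard ≤ m :=
  calc {p : ℕ × ℕ | p.2 < p.1 ∧ a p.1 = a p.2 + x}.encard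
      ≤ (a ⁻¹' Set.Ico x (d ^ m * x)).encard :=
        Set.encard_le_encard_of_injOn
          (fun _ hp ↦ mem_Ico_pow_mul_of_eq_add hd hmono hnonneg hlac hm hp.1 hp.2)
          ((injOn_fst_setOf_eq_add hmono.injective x).mono fun _ hp ↦ hp.2)
    _ ≤ m := encard_preimage_Ico_pow_mul_le (zero_le_one.trans hd.le) hmono.monotone hlac x m

end Ring

theorem lacunary_bounded_representations_general {K : Type*} [Field K] [LinearOrder K]
    [IsStrictOrderedRing K] [Archimedean K] {a : ℕ → K} {d : K} (hd : 1 < d)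
    (hmono : StrictMono a) (hnonneg : 0 ≤ a 0) (hlac : ∀ k, d * a k ≤ a (k + 1)) :
    ∃ M : ℕ, ∀ x : K, {p : ℕ × ℕ | p.2 < p.1 ∧ a p.1 = a p.2 + x}.encard ≤ M := by
  obtain ⟨m, hm⟩ := pow_unbounded_of_one_lt (d / (d - 1)) hd
  exact ⟨m, encard_setOf_eq_add_le hd hmono hnonneg hlac ((div_lt_iff₀' (sub_pos.2 hd)).1 hm)⟩

/-- For a Hadamard lacunary sequence `(nₖ)` there is `M` such that every integer `I` has at
most `M` representations `I = n_j − n_k` with `j > k`. -/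
theorem lacunary_bounded_representations (n : ℕ → ℕ) (d : ℝ) (hd : 1 < d)
    (hmono : StrictMono n) (hlac : ∀ k, d * n k ≤ n (k + 1)) :
    ∃ M : ℕ, ∀ I : ℕ,
      {p : ℕ × ℕ | p.2 < p.1 ∧ n p.1 = n p.2 + I}.encard ≤ (M : ℕ∞) := by
  obtain ⟨M, hM⟩ := lacunary_bounded_representations_general (a := fun k ↦ (n k : ℝ)) hd
    (Nat.strictMono_cast.comp hmono) (Nat.cast_nonneg (n 0)) hlac
  exact ⟨M, fun I ↦ by exact_mod_cast hM I⟩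
end

section
/- Let (b_n)_{n≥0} be a sequence of nonnegative reals with ∑_{n≥0} b_n < ∞, and let (n_k)_{k≥1} be a Hadamard lacunary sequence of nonnegative integers. Then ∑_{k≥1} ∑_{j>k} b_{n_j − n_k} < ∞. -/
/-!
Two pairs `k < j` and `k' < j'` with `n j - n k = n j' - n k'` have comparable larger terms:
lacunarity makes each difference at least `(1 - 1/d)` times its larger term, and it is at most that
term. As `n` grows geometrically, `|j - j'|` is then less than a constant `L`. So a pair is
determined by its difference together with the residue of `j` modulo `L`, and the double sum splits
into `L` sums, each over distinct terms of `b`.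
-/

open Function

section Summable

variable {ι κ γ E : Type*} [Finite γ] {b : κ → E}

theorem summable_comp_fst_of_finite [AddCommMonoid E] [TopologicalSpace E] [ContinuousAdd E]
    (hb : Summable b) : Summable fun p : κ × γ => b p.1 := by
  classical
  have := Fintype.ofFinite γ
  have summable_fiber (c : γ) : Summable fun p : κ × γ => if p.2 = c then b p.1 else 0 := by
    refine ((Prod.mk_left_injective c).summable_iff ?_).1 (by simpa [comp_def] using hb)
    rintro ⟨x, c'⟩ hx
    exact if_neg fun h : c' = c => hx ⟨x, by rw [h]⟩
  simpa using summable_sum (s := Finset.univ) fun c _ => summable_fiber c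

theorem summable_comp_of_injective_prodMk [AddCommGroup E] [UniformSpace E] [IsUniformAddGroup E]
    [CompleteSpace E] (hb : Summable b) {f : ι → κ} {c : ι → γ}
    (hfc : Injective fun i => (f i, c i)) :
    Summable fun i => b (f i) :=
  (summable_comp_fst_of_finite hb).comp_injective hfc

end Summable

section Lacunary

variable {R : Type*} [CommRing R] [LinearOrder R] [IsStrictOrderedRing R] {u : ℕ → R} {d : R}

theorem pow_mul_le_of_lacunary (hd : 0 ≤ d) (hlac : ∀ k, d * u k ≤ u (k + 1)) (k l : ℕ) :
    d ^ l * u k ≤ u (k + l) := by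
  induction l with
  | zero => simp
  | succ l ih =>
    calc d ^ (l + 1) * u k = d * (d ^ l * u k) := by ring
      _ ≤ d * u (k + l) := mul_le_mul_of_nonneg_left ih hd
      _ ≤ u (k + (l + 1)) := hlac (k + l)

theorem sub_one_mul_le_mul_sub_of_lacunary (hu : Monotone u)
    (hlac : ∀ k, d * u k ≤ u (k + 1)) {k j : ℕ} (hkj : k < j) :
    (d - 1) * u j ≤ d * (u j - u k) := by
  have : d * u k ≤ u j := (hlac k).trans (hu hkj)
  linarith

theorem lt_add_of_sub_le_sub_of_lacunary (hd : 1 ≤ d) (hu : StrictMono u) (hu0 : 0 ≤ u 0)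
    (hlac : ∀ k, d * u k ≤ u (k + 1)) {L : ℕ} (hL : d < (d - 1) * d ^ L)
    {j k j' k' : ℕ} (hkj : k < j) (hkj' : k' < j') (hle : u j' - u k' ≤ u j - u k) :
    j' < j + L := by
  have hd0 : 0 ≤ d := zero_le_one.trans hd
  have huk : 0 ≤ u k := hu0.trans (hu.monotone k.zero_le)
  have huj : 0 < u j := huk.trans_lt (hu hkj)
  by_contra! hj
  have growth : d ^ L * u j ≤ u j' :=
    (pow_mul_le_of_lacunary hd0 hlac j L).trans (hu.monotone hj)
  refine lt_irrefl (d * u j) ?_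
  calc d * u j < (d - 1) * d ^ L * u j := mul_lt_mul_of_pos_right hL huj
    _ = (d - 1) * (d ^ L * u j) := mul_assoc _ _ _
    _ ≤ (d - 1) * u j' := mul_le_mul_of_nonneg_left growth (sub_nonneg.2 hd)
    _ ≤ d * (u j' - u k') := sub_one_mul_le_mul_sub_of_lacunary hu.monotone hlac hkj'
    _ ≤ d * (u j - u k) := mul_le_mul_of_nonneg_left hle hd0
    _ ≤ d * u j := mul_le_mul_of_nonneg_left (sub_le_self _ huk) hd0

theorem injOn_sub_prodMk_natCast_of_lacunary (hd : 1 ≤ d) (hu : StrictMono u) (hu0 : 0 ≤ u 0)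
    (hlac : ∀ k, d * u k ≤ u (k + 1)) {L : ℕ} (hL : d < (d - 1) * d ^ L) :
    Set.InjOn (fun p : ℕ × ℕ => (u p.1 - u p.2, (p.1 : ZMod L))) {p | p.2 < p.1} := by
  rintro ⟨j, k⟩ hkj ⟨j', k'⟩ hkj' heq
  obtain ⟨hsub, hres⟩ := Prod.mk.inj heq
  have hlt : j' < j + L := lt_add_of_sub_le_sub_of_lacunary hd hu hu0 hlac hL hkj hkj' hsub.ge
  have hlt' : j < j' + L := lt_add_of_sub_le_sub_of_lacunary hd hu hu0 hlac hL hkj' hkj hsub.le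
  have hmod : j ≡ j' [MOD L] := (ZMod.natCast_eq_natCast_iff _ _ _).1 hres
  obtain rfl : j = j' := hmod.eq_of_abs_lt (abs_lt.2 ⟨by lia, by lia⟩)
  exact congrArg (Prod.mk j) (hu.injective (sub_right_injective hsub))

end Lacunary

theorem lacunary_double_sum_summable_general {E : Type*} [AddCommGroup E] [UniformSpace E]
    [IsUniformAddGroup E] [CompleteSpace E] {b : ℕ → E} (hsum : Summable b)
    {n : ℕ → ℕ} {d : ℝ} (hd : 1 < d) (hmono : StrictMono n)
    (hlac : ∀ k, d * n k ≤ n (k + 1)) :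
    Summable fun p : ℕ × ℕ => if p.2 < p.1 then b (n p.1 - n p.2) else 0 := by
  obtain ⟨L, hL⟩ : ∃ L : ℕ, d < (d - 1) * d ^ L :=
    (pow_unbounded_of_one_lt (d / (d - 1)) hd).imp fun _ => (div_lt_iff₀' (sub_pos.2 hd)).1
  have : NeZero L := ⟨by rintro rfl; linarith [pow_zero d]⟩
  have hinj : Injective fun p : {p : ℕ × ℕ | p.2 < p.1} =>
      (n p.1.1 - n p.1.2, (p.1.1 : ZMod L)) := by
    intro p q heq
    obtain ⟨hsub, hres⟩ := Prod.mk.inj heq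
    refine Subtype.ext (injOn_sub_prodMk_natCast_of_lacunary hd.le
      (Nat.strictMono_cast.comp hmono) (Nat.cast_nonneg _) hlac hL p.2 q.2 (Prod.ext ?_ hres))
    simpa only [comp_apply, Nat.cast_sub (hmono p.2).le, Nat.cast_sub (hmono q.2).le] using
      congrArg (Nat.cast : ℕ → ℝ) hsub
  have hindicator : Summable ({p : ℕ × ℕ | p.2 < p.1}.indicator fun p => b (n p.1 - n p.2)) :=
    summable_subtype_iff_indicator.1 (summable_comp_of_injective_prodMk hsum hinj)
  exact hindicator.congr fun p => by simp only [Set.indicator_apply, Set.mem_ofPred_eq]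

/-- If `(b_n)` is a nonnegative summable sequence and `(nₖ)` is Hadamard lacunary, then
`∑_{k} ∑_{j > k} b_{n_j − n_k} < ∞`. -/
theorem lacunary_double_sum_summable (b : ℕ → ℝ) (hb : ∀ m, 0 ≤ b m) (hsum : Summable b)
    (n : ℕ → ℕ) (d : ℝ) (hd : 1 < d) (hmono : StrictMono n)
    (hlac : ∀ k, d * n k ≤ n (k + 1)) :
    Summable fun p : ℕ × ℕ => if p.2 < p.1 then b (n p.1 - n p.2) else 0 :=
  lacunary_double_sum_summable_general hsum hd hmono hlac
end

section
/- Let X be a separable Hilbert space and f(z) = ∑_{k≥1} a_k z^{n_k} ∈ H²(𝔻, X) a lacunary series which is not a polynomial (infinitely many a_k are nonzero), such that the normalized sequence (a_k/‖a_k‖)_{k : a_k ≠ 0} is relatively compact in X. Then there exists a nonzero element x ∈ X such that for every N ≥ 0 the closed subspace H² ⊗ x = {g ∈ H²(𝔻, X) : ĝ(n) ∈ ℂx for all n ≥ 0} is contained in E_{S*^N f}. -/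
open scoped InnerProductSpace ENNReal
noncomputable section

variable {X : Type*} [NormedAddCommGroup X] [InnerProductSpace ℂ X]

/-!
By Hahn–Banach, `H² ⊗ x ⊆ E_{S*^N f}` as soon as every functional `φ = (φ_i)` on `ℓ²(ℕ, X)` that
kills all `S*^k f` with `k ≥ N` has each coordinate `φ_m` vanishing at `x`. Such a `φ` satisfies
`∑_i φ_i (f̂(k + i)) = 0`. If `n = k + m` is a large element of the spectrum, no `k + i` with
`i < m` lies in the spectrum, so `φ_m (f̂(n)) = - ∑_{j > n} φ_{j - k} (f̂(j))`. With
`r_n = ∑_{j > n} ‖f̂(j)‖²`, Cauchy–Schwarz bounds `‖φ_m (f̂(n))‖² / r_n` by the sum of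
`‖φ_{m + s}‖²` over the `s > 0` with `n + s` in the spectrum. Each difference `s` occurs boundedly
often in a lacunary set, so `∑_n ‖φ_m (f̂(n))‖² / r_n < ∞`, whereas `∑_n ‖f̂(n)‖² / r_n = ∞` by
Dini. Hence `φ_m (f̂(n)) / ‖f̂(n)‖` tends to `0` along the proper filter of sets off which
`‖f̂(n)‖² / r_n` is summable, and any cluster point `x` of `f̂(n) / ‖f̂(n)‖` along that filter
will do. This `x` depends neither on `φ` nor on `N`.
-/

section

open Filter Topology

/-- The tail `∑_{j > n} b j` of a real series; it is the junk value `0` when the series diverges. -/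
def tailSum (b : ℕ → ℝ) (n : ℕ) : ℝ := ∑' j, b (j + (n + 1))

lemma tailSum_nonneg {b : ℕ → ℝ} (hb : 0 ≤ b) (n : ℕ) : 0 ≤ tailSum b n :=
  tsum_nonneg fun _ => hb _

lemma tailSum_pos {b : ℕ → ℝ} (hb : 0 ≤ b) (hs : Summable b) {n k : ℕ} (hnk : n < k)
    (hk : 0 < b k) : 0 < tailSum b n :=
  ((summable_nat_add_iff (n + 1)).2 hs).tsum_pos (fun _ => hb _) (k - (n + 1))
    (by rwa [Nat.sub_add_cancel hnk])

lemma tailSum_antitone {b : ℕ → ℝ} (hb : 0 ≤ b) (hs : Summable b) : Antitone (tailSum b) := by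
  refine antitone_nat_of_succ_le fun n => ?_
  have hsplit := ((summable_nat_add_iff (n + 1)).2 hs).tsum_eq_zero_add
  simp only [add_right_comm _ 1 (n + 1)] at hsplit
  exact (le_add_of_nonneg_left (hb _)).trans_eq hsplit.symm

lemma tendsto_tailSum_zero (b : ℕ → ℝ) : Tendsto (tailSum b) atTop (𝓝 0) :=
  (tendsto_sum_nat_add b).comp (tendsto_add_atTop_nat 1)

/-- **Dini's theorem**. Were the ratios summable, those beyond some index `M` would sum to less than
`1`; but tails decrease, so they sum to at least `tailSum b M / tailSum b M = 1`. -/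
lemma not_summable_div_tailSum {b : ℕ → ℝ} (hb : 0 ≤ b) (hs : Summable b)
    (hpos : ∀ n, 0 < tailSum b n) : ¬ Summable fun n => b n / tailSum b n := by
  intro hdiv
  obtain ⟨M, hM⟩ := ((tendsto_tailSum_zero _).eventually_lt_const one_pos).exists
  have hle : tailSum b M ≤ tailSum b M * tailSum (fun n => b n / tailSum b n) M := by
    conv_rhs => rw [tailSum, tailSum, ← tsum_mul_left]
    refine ((summable_nat_add_iff (M + 1)).2 hs).tsum_le_tsum (fun j => ?_)
      (((summable_nat_add_iff (M + 1)).2 hdiv).mul_left _)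
    rw [← mul_div_assoc, le_div_iff₀ (hpos _), mul_comm]
    exact mul_le_mul_of_nonneg_right (tailSum_antitone hb hs (by lia)) (hb _)
  exact hle.not_gt (mul_lt_of_lt_one_right (hpos M) hM)

/-- The filter of sets off which the weight `w` is summable: the analogue of `Filter.cofinite` with
`Summable` for finiteness. -/
def coSummable {ι : Type*} (w : ι → ℝ) : Filter ι :=
  Filter.comk (fun s => Summable (s.indicator w))
    (by simpa only [Set.indicator_empty] using summable_zero)
    (fun t ht s hst => by
      simpa only [Set.indicator_indicator, Set.inter_eq_left.2 hst] using ht.indicator s)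
    (fun s hs t ht => by
      rw [← Set.union_sdiff_self, Set.indicator_union_of_disjoint Set.disjoint_sdiff_right]
      refine hs.add ?_
      simpa only [Set.indicator_indicator, Set.inter_eq_left.2 Set.sdiff_subset]
        using ht.indicator (t \ s))

lemma coSummable_neBot_iff {ι : Type*} {w : ι → ℝ} : (coSummable w).NeBot ↔ ¬ Summable w := by
  rw [neBot_iff, Ne, ← empty_mem_iff_bot, coSummable, mem_comk, Set.compl_empty,
    Set.indicator_univ]

lemma eventually_coSummable_ne_zero {ι : Type*} (w : ι → ℝ) : ∀ᶠ i in coSummable w, w i ≠ 0 := by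
  have hzero : {i | w i ≠ 0}ᶜ.indicator w = 0 :=
    Set.indicator_eq_zero'.2 disjoint_compl_right
  rw [Filter.Eventually, coSummable, mem_comk, hzero]
  exact summable_zero

lemma tendsto_coSummable_zero {ι : Type*} {g w : ι → ℝ} (hg : 0 ≤ g) (hw : 0 ≤ w)
    (hs : Summable fun i => g i * w i) : Tendsto g (coSummable w) (𝓝 0) := by
  refine (tendsto_order.2 ⟨fun a ha => .of_forall fun i => ha.trans_le (hg i), fun ε hε => ?_⟩)
  rw [Filter.Eventually, coSummable, mem_comk]
  refine .of_nonneg_of_le (fun i => Set.indicator_nonneg (fun i _ => hw i) i) (fun i => ?_)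
    (hs.mul_left ε⁻¹)
  refine Set.indicator_le' (fun i hi => ?_)
    (fun i _ => mul_nonneg (inv_nonneg.2 hε.le) (mul_nonneg (hg i) (hw i))) i
  rw [le_inv_mul_iff₀ hε]
  exact mul_le_mul_of_nonneg_right (not_lt.1 hi) (hw i)

lemma eq_of_mapClusterPt_of_tendsto {ι Y : Type*} [TopologicalSpace Y] [T2Space Y] {F : Filter ι}
    {v : ι → Y} {y z : Y} (hy : MapClusterPt y F v) (hv : Tendsto v F (𝓝 z)) : y = z :=
  haveI : (𝓝 y ⊓ 𝓝 z).NeBot := hy.clusterPt.mono hv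
  eq_of_nhds_neBot this

/-- Each nonzero difference occurs at most `R` times among the elements of `Λ`, with `R` uniform. -/
def BddDiffMultiplicity (Λ : Set ℕ) : Prop :=
  ∃ R : ℕ, ∀ s, 0 < s → {n | n ∈ Λ ∧ n + s ∈ Λ}.encard ≤ R

lemma floor_logb_lt_floor_logb {d a b : ℝ} (hd : 1 < d) (ha : 1 ≤ a) (hab : d * a ≤ b) :
    ⌊Real.logb d a⌋₊ < ⌊Real.logb d b⌋₊ := by
  have ha0 : 0 < a := one_pos.trans_le ha
  have hd0 : 0 < d := one_pos.trans hd
  rw [Nat.lt_iff_add_one_le, ← Nat.floor_add_one (Real.logb_nonneg hd ha)]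
  refine Nat.floor_le_floor ?_
  rw [← Real.logb_self_eq_one hd, ← Real.logb_mul ha0.ne' hd0.ne', mul_comm]
  exact Real.logb_le_logb_of_le hd (mul_pos hd0 ha0) hab

lemma HadLac.bddDiffMultiplicity {Λ : Set ℕ} (hΛ : HadLac Λ) : BddDiffMultiplicity Λ := by
  obtain ⟨d, hd, hgap⟩ := hΛ
  have hd' : 0 < d - 1 := sub_pos.2 hd
  refine ⟨⌊Real.logb d (d / (d - 1))⌋₊ + 1, fun s hs => ?_⟩
  have hs' : (0 : ℝ) < s := Nat.cast_pos.2 hs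
  -- Both `n` and `n + s` in `Λ` force `(n + s) / s ≤ d / (d - 1)`, and from one such `n` to the
  -- next `(n + s) / s` grows by a factor at least `d`.
  let e (n : ℕ) : ℕ := ⌊Real.logb d ((n + s : ℕ) / s)⌋₊
  have hmaps : Set.MapsTo e {n | n ∈ Λ ∧ n + s ∈ Λ}
      (Finset.range (⌊Real.logb d (d / (d - 1))⌋₊ + 1)) := by
    rintro n ⟨hn, hns⟩
    have hle := hgap n hn _ hns (Nat.lt_add_of_pos_right hs)
    rw [Finset.coe_range, Set.mem_Iio, Nat.lt_succ_iff]
    refine Nat.floor_le_floor (Real.logb_le_logb_of_le hd (by positivity) ?_)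
    rw [div_le_div_iff₀ hs' hd']
    push_cast at hle ⊢
    linarith
  have hmono : StrictMonoOn e {n | n ∈ Λ ∧ n + s ∈ Λ} := by
    rintro m ⟨-, hm⟩ n ⟨-, hn⟩ hmn
    refine floor_logb_lt_floor_logb hd ?_ ?_
    · rw [one_le_div hs']
      exact_mod_cast Nat.le_add_left s m
    · rw [← mul_div_assoc]
      gcongr
      exact hgap _ hm _ hn (Nat.add_lt_add_right hmn s)
  rw [← Finset.card_range (_ + 1), ← Set.encard_coe_eq_coe_finsetCard]
  exact Set.encard_le_encard_of_injOn hmaps hmono.injOn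

lemma BddDiffMultiplicity.eventually_notMem {Λ : Set ℕ} (hΛ : BddDiffMultiplicity Λ) (m : ℕ) :
    ∀ᶠ k in atTop, k + m ∈ Λ → ∀ i < m, k + i ∉ Λ := by
  obtain ⟨R, hR⟩ := hΛ
  have hfix : ∀ i ∈ Set.Iio m, ∀ᶠ k in atTop, ¬ (k + i ∈ Λ ∧ k + i + (m - i) ∈ Λ) := by
    intro i hi
    have hfin := Set.finite_of_encard_le_coe (hR (m - i) (Nat.sub_pos_of_lt hi))
    have hev := (tendsto_add_atTop_nat i).eventually
      (Nat.cofinite_eq_atTop ▸ hfin.eventually_cofinite_notMem)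
    exact hev
  filter_upwards [((Set.finite_Iio m).eventually_all).2 hfix] with k hk hkm i hi hki
  exact hk i hi ⟨hki, by rwa [add_assoc, Nat.add_sub_cancel' hi.le]⟩

lemma BddDiffMultiplicity.summable_tsum_indicator {Λ : Set ℕ} (hΛ : BddDiffMultiplicity Λ)
    {c : ℕ → ℝ} (hc : 0 ≤ c) (hs : Summable c) :
    Summable fun n => ∑' s, {s | n ∈ Λ ∧ s + (n + 1) ∈ Λ}.indicator c s := by
  obtain ⟨R, hR⟩ := hΛ
  let A (s : ℕ) : Set ℕ := {n | n ∈ Λ ∧ s + (n + 1) ∈ Λ}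
  have hA : ∀ s, (A s).encard ≤ R := fun s => by
    simpa only [A, add_comm, add_left_comm] using hR (s + 1) s.succ_pos
  have hfin : ∀ s, (A s).Finite := fun s => Set.finite_of_encard_le_coe (hA s)
  have hcard : ∀ s, (A s).ncard ≤ R := fun s => by
    have := hA s
    rwa [← (hfin s).cast_ncard_eq, Nat.cast_le] at this
  let F : ℕ × ℕ → ℝ := fun p => (A p.1).indicator (fun _ => c p.1) p.2
  have hF : 0 ≤ F := fun p => Set.indicator_nonneg (fun _ _ => hc _) _
  have hsum : ∀ s, ∑' n, F (s, n) = (A s).ncard * c s := fun s => by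
    rw [← nsmul_eq_mul, ← Nat.card_coe_set_eq, ← tsum_const]
    exact (tsum_subtype (A s) fun _ => c s).symm
  have hsummable : Summable F := by
    refine (summable_prod_of_nonneg hF).2
      ⟨fun s => summable_of_hasFiniteSupport ((hfin s).subset Set.support_indicator_subset), ?_⟩
    refine .of_nonneg_of_le (fun s => tsum_nonneg fun n => hF _) (fun s => ?_) (hs.mul_left (R : ℝ))
    rw [hsum]
    exact mul_le_mul_of_nonneg_right (Nat.cast_le.2 (hcard s)) (hc s)
  exact hsummable.prod_symm.prod

lemma sq_norm_le_tsum_sq_mul_tsum_sq {ι G : Type*} [SeminormedAddCommGroup G] {c : ι → G} {t : G}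
    {a b : ι → ℝ} (hc : HasSum c t) (hcab : ∀ i, ‖c i‖ ≤ a i * b i)
    (ha : Summable fun i => a i ^ 2) (hb : Summable fun i => b i ^ 2) :
    ‖t‖ ^ 2 ≤ (∑' i, a i ^ 2) * ∑' i, b i ^ 2 := by
  refine le_of_tendsto (hc.norm.pow 2) (.of_forall fun T => ?_)
  calc ‖∑ i ∈ T, c i‖ ^ 2 ≤ (∑ i ∈ T, a i * b i) ^ 2 := by
        gcongr; exact norm_sum_le_of_le T fun i _ => hcab i
    _ ≤ (∑ i ∈ T, a i ^ 2) * ∑ i ∈ T, b i ^ 2 := Finset.sum_mul_sq_le_sq_mul_sq T a b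
    _ ≤ (∑' i, a i ^ 2) * ∑' i, b i ^ 2 :=
        mul_le_mul (ha.sum_le_tsum T fun i _ => sq_nonneg (a i))
          (hb.sum_le_tsum T fun i _ => sq_nonneg (b i))
          (Finset.sum_nonneg fun i _ => sq_nonneg (b i)) (tsum_nonneg fun i => sq_nonneg (a i))

section Pairing

variable {𝕜 E G : Type*} [NontriviallyNormedField 𝕜] [SeminormedAddCommGroup E] [NormedSpace 𝕜 E]
  [SeminormedAddCommGroup G] [NormedSpace 𝕜 G] {a : ℕ → E} {φ : ℕ → E →L[𝕜] G}

lemma sq_norm_apply_le_mul_tailSum (ha : Summable fun n => ‖a n‖ ^ 2)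
    (hφ : Summable fun n => ‖φ n‖ ^ 2) {k m : ℕ} (hpair : HasSum (fun i => φ i (a (k + i))) 0)
    (hzero : ∀ i < m, a (k + i) = 0) :
    ‖φ m (a (k + m))‖ ^ 2 ≤
      (∑' s, {s | a (s + (k + m + 1)) ≠ 0}.indicator (fun s => ‖φ (s + (m + 1))‖ ^ 2) s) *
        tailSum (fun n => ‖a n‖ ^ 2) (k + m) := by
  have hrest : HasSum (fun s => φ (s + (m + 1)) (a (s + (k + m + 1)))) (-φ m (a (k + m))) := by
    have h := (hasSum_nat_add_iff' (m + 1)).2 hpair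
    rw [Finset.sum_range_succ, Finset.sum_eq_zero fun i hi => by
      rw [hzero i (Finset.mem_range.1 hi), map_zero], zero_add, zero_sub] at h
    simpa only [add_left_comm k, add_assoc] using h
  have hind : ∀ s, {s | a (s + (k + m + 1)) ≠ 0}.indicator (fun s => ‖φ (s + (m + 1))‖ ^ 2) s =
      {s | a (s + (k + m + 1)) ≠ 0}.indicator (fun s => ‖φ (s + (m + 1))‖) s ^ 2 := fun s => by
    by_cases hs : a (s + (k + m + 1)) = 0 <;> simp [hs]
  rw [← norm_neg, tailSum]
  simp_rw [hind]
  have hatail := (summable_nat_add_iff (k + m + 1)).2 ha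
  refine sq_norm_le_tsum_sq_mul_tsum_sq hrest (fun s => ?_) ?_ hatail
  · by_cases hs : a (s + (k + m + 1)) = 0
    · simp [hs]
    · simpa [hs] using (φ (s + (m + 1))).le_opNorm (a (s + (k + m + 1)))
  · simp_rw [← hind]
    exact ((summable_nat_add_iff (m + 1)).2 hφ).indicator _

lemma summable_sq_norm_apply_div_tailSum (ha : Summable fun n => ‖a n‖ ^ 2)
    (hφ : Summable fun n => ‖φ n‖ ^ 2) (hΛ : BddDiffMultiplicity {n | a n ≠ 0})
    (hpair : ∀ᶠ k in atTop, HasSum (fun i => φ i (a (k + i))) 0) (m : ℕ) :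
    Summable fun n => ‖φ m (a n)‖ ^ 2 / tailSum (fun n => ‖a n‖ ^ 2) n := by
  have htail : ∀ n, 0 ≤ tailSum (fun n => ‖a n‖ ^ 2) n := tailSum_nonneg fun _ => sq_nonneg _
  have hφtail := (summable_nat_add_iff (m + 1)).2 hφ
  have hcount := hΛ.summable_tsum_indicator (fun _ => sq_nonneg _) hφtail
  rw [← summable_nat_add_iff m] at hcount ⊢
  refine hcount.of_norm_bounded_eventually_nat ?_
  filter_upwards [hpair, hΛ.eventually_notMem m] with k hk hgap
  have hbound_nonneg : 0 ≤ ∑' s, {s | a (k + m) ≠ 0 ∧ a (s + (k + m + 1)) ≠ 0}.indicator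
      (fun s => ‖φ (s + (m + 1))‖ ^ 2) s :=
    tsum_nonneg fun s => Set.indicator_nonneg (fun _ _ => sq_nonneg _) s
  rw [Real.norm_of_nonneg (div_nonneg (sq_nonneg _) (htail _))]
  rcases eq_or_ne (a (k + m)) 0 with hkm | hkm
  · simp [hkm]
  refine div_le_of_le_mul₀ (htail _) hbound_nonneg ?_
  have hzero : ∀ i < m, a (k + i) = 0 := fun i hi => not_not.1 (hgap hkm i hi)
  simpa [hkm] using sq_norm_apply_le_mul_tailSum ha hφ hk hzero

end Pairing

lemma apply_eq_zero_of_mapClusterPt {ι E G : Type*} [NormedAddCommGroup E] [NormedSpace ℝ E]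
    [NormedAddCommGroup G] [NormedSpace ℝ G] (A : E →L[ℝ] G) {a : ι → E} {r : ι → ℝ} (hr : 0 ≤ r)
    (hA : Summable fun i => ‖A (a i)‖ ^ 2 / r i) {x : E}
    (hx : MapClusterPt x (coSummable fun i => ‖a i‖ ^ 2 / r i) fun i => ‖a i‖⁻¹ • a i) :
    A x = 0 := by
  have hlim : Tendsto (fun i => ‖A (‖a i‖⁻¹ • a i)‖ ^ 2) (coSummable fun i => ‖a i‖ ^ 2 / r i)
      (𝓝 0) := by
    refine tendsto_coSummable_zero (fun _ => sq_nonneg _)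
      (fun i => div_nonneg (sq_nonneg _) (hr i)) (hA.congr fun i => ?_)
    by_cases hi : a i = 0
    · simp [hi]
    · have := norm_ne_zero_iff.2 hi
      rw [map_smul, norm_smul, norm_inv, norm_norm]
      field_simp
  have hcluster := hx.tendsto_comp (f := fun y => ‖A y‖ ^ 2)
    (by fun_prop : Continuous fun y => ‖A y‖ ^ 2).continuousAt
  simpa using eq_of_mapClusterPt_of_tendsto hcluster hlim

lemma exists_norm_eq_one_mapClusterPt {ι E : Type*} [NormedAddCommGroup E] [NormedSpace ℝ E]
    {a : ι → E} {w : ι → ℝ} (hw : ¬ Summable w) (haw : ∀ i, a i = 0 → w i = 0)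
    (ha : IsCompact (closure {v | ∃ i, a i ≠ 0 ∧ v = ‖a i‖⁻¹ • a i})) :
    ∃ x, ‖x‖ = 1 ∧ MapClusterPt x (coSummable w) fun i => ‖a i‖⁻¹ • a i := by
  have := coSummable_neBot_iff.2 hw
  have hmem : ∀ᶠ i in coSummable w, ‖a i‖⁻¹ • a i ∈
      closure {v | ∃ i, a i ≠ 0 ∧ v = ‖a i‖⁻¹ • a i} ∩ Metric.sphere 0 1 := by
    filter_upwards [eventually_coSummable_ne_zero w] with i hi
    have hai : a i ≠ 0 := fun h => hi (haw i h)
    exact ⟨subset_closure ⟨i, hai, rfl⟩, by simp [norm_smul, hai]⟩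
  obtain ⟨x, ⟨-, hx1⟩, hx⟩ :=
    (ha.inter_right Metric.isClosed_sphere).exists_mapClusterPt
      (tendsto_principal.2 hmem)
  exact ⟨x, mem_sphere_zero_iff_norm.1 hx1, hx⟩

section Duality

variable {𝕜 : Type*} [RCLike 𝕜]

lemma mem_topologicalClosure_of_forall_dual {V : Type*} [NormedAddCommGroup V]
    [NormedSpace 𝕜 V] {M : Submodule 𝕜 V} {g : V}
    (h : ∀ φ : StrongDual 𝕜 V, (∀ v ∈ M, φ v = 0) → φ g = 0) : g ∈ M.topologicalClosure := by
  have : IsClosed (M.topologicalClosure : Set V) := M.isClosed_topologicalClosure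
  rw [← Submodule.Quotient.mk_eq_zero]
  refine SeparatingDual.eq_zero_of_forall_dual_eq_zero (R := 𝕜) fun ψ => ?_
  refine h (ψ.comp M.topologicalClosure.mkQL) fun v hv => ?_
  rw [ContinuousLinearMap.comp_apply, Submodule.mkQL_apply, Submodule.mkQ_apply,
    (Submodule.Quotient.mk_eq_zero _).2 (M.le_topologicalClosure hv), map_zero]

variable {ι : Type*} [DecidableEq ι] {E : ι → Type*} [∀ i, NormedAddCommGroup (E i)]
  [∀ i, NormedSpace 𝕜 (E i)]

/-- The `i`-th coordinate of a functional on the `ℓ²`-sum `lp E 2`. -/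
def dualCoord (φ : StrongDual 𝕜 (lp E 2)) (i : ι) : StrongDual 𝕜 (E i) :=
  φ.comp (lp.singleContinuousLinearMap 𝕜 E 2 i)

lemma hasSum_dualCoord (φ : StrongDual 𝕜 (lp E 2)) (g : lp E 2) :
    HasSum (fun i => dualCoord φ i (g i)) (φ g) :=
  φ.hasSum (lp.hasSum_single ENNReal.ofNat_ne_top g)

lemma sum_sq_norm_dualCoord_apply_le (φ : StrongDual 𝕜 (lp E 2)) {x : ∀ i, E i}
    (hx : ∀ i, ‖x i‖ ≤ 1) (T : Finset ι) :
    ∑ i ∈ T, ‖dualCoord φ i (x i)‖ ^ 2 ≤ ‖φ‖ ^ 2 := by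
  set S := ∑ i ∈ T, ‖dualCoord φ i (x i)‖ ^ 2
  -- `φ` takes the value `S` at `v`, while `‖v‖ ^ 2 ≤ S`.
  let y (i : ι) : E i := star (dualCoord φ i (x i)) • x i
  let v : lp E 2 := ∑ i ∈ T, lp.single 2 i (y i)
  have hφv : φ v = (S : 𝕜) := by
    simp only [v, y, S, map_sum]
    push_cast
    refine Finset.sum_congr rfl fun i _ => ?_
    change dualCoord φ i _ = _
    rw [map_smul, smul_eq_mul]
    exact RCLike.conj_mul _
  have hv : ‖v‖ ^ 2 ≤ S := by
    have h := lp.norm_sum_single (p := 2) (by norm_num) y T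
    simp only [ENNReal.toReal_ofNat, Real.rpow_ofNat] at h
    refine h.trans_le (Finset.sum_le_sum fun i _ => ?_)
    rw [norm_smul, norm_star]
    gcongr
    exact mul_le_of_le_one_right (norm_nonneg _) (hx i)
  have hS : 0 ≤ S := Finset.sum_nonneg fun _ _ => sq_nonneg _
  have hsq : S * S ≤ ‖φ‖ ^ 2 * S := by
    calc S * S = ‖φ v‖ ^ 2 := by rw [hφv, RCLike.norm_ofReal, sq_abs, sq]
      _ ≤ (‖φ‖ * ‖v‖) ^ 2 := by gcongr; exact φ.le_opNorm v
      _ ≤ ‖φ‖ ^ 2 * S := by rw [mul_pow]; gcongr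
  rcases hS.eq_or_lt with h0 | hpos
  · exact h0.symm.trans_le (sq_nonneg _)
  · exact le_of_mul_le_mul_right hsq hpos

lemma summable_sq_norm_dualCoord (φ : StrongDual 𝕜 (lp E 2)) :
    Summable fun i => ‖dualCoord φ i‖ ^ 2 := by
  have hnear : ∀ i, ∃ x : E i, ‖x‖ ≤ 1 ∧ ‖dualCoord φ i‖ ≤ 2 * ‖dualCoord φ i x‖ := by
    intro i
    rcases (norm_nonneg (dualCoord φ i)).eq_or_lt with h0 | hpos
    · exact ⟨0, by simp, by simp [← h0]⟩
    · obtain ⟨x, hx, hlt⟩ := (dualCoord φ i).exists_lt_apply_of_lt_opNorm (half_lt_self hpos)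
      exact ⟨x, hx.le, by linarith⟩
  choose x hx hnorm using hnear
  have hsum : Summable fun i => ‖dualCoord φ i (x i)‖ ^ 2 :=
    summable_of_sum_le (fun _ => sq_nonneg _) (sum_sq_norm_dualCoord_apply_le φ hx)
  refine .of_nonneg_of_le (fun _ => sq_nonneg _) (fun i => ?_) (hsum.mul_left (2 ^ 2))
  rw [← mul_pow]
  exact pow_le_pow_left₀ (norm_nonneg _) (hnorm i) 2

end Duality

lemma bshift_iterate_apply (f : H2 X) (k i : ℕ) : (bshift^[k] f : H2 X) i = f (k + i) := by
  induction k generalizing f with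
  | zero => rw [Function.iterate_zero_apply, zero_add]
  | succ k ih =>
    rw [Function.iterate_succ_apply, ih, add_right_comm]
    rfl

lemma summable_sq_norm_coeff (f : H2 X) : Summable fun n => ‖f n‖ ^ 2 := by
  simpa using (lp.hasSum_norm (p := 2) (by norm_num) f).summable

lemma H2sub_span_singleton_le_Ef_of_forall_dual {f : H2 X} {x : X}
    (h : ∀ φ : StrongDual ℂ (H2 X), (∀ k, φ (bshift^[k] f) = 0) → ∀ i, dualCoord φ i x = 0) :
    H2sub (Submodule.span ℂ {x}) ≤ Ef f := by
  intro g hg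
  refine mem_topologicalClosure_of_forall_dual fun φ hφ => ?_
  have hx := h φ fun k => hφ _ (Submodule.subset_span ⟨f, rfl, k, rfl⟩)
  have hcoord : ∀ i, dualCoord φ i (g i) = 0 := fun i => by
    obtain ⟨c, hc⟩ := Submodule.mem_span_singleton.1 (hg i)
    rw [← hc, map_smul, hx, smul_zero]
  simpa [hcoord, eq_comm] using (hasSum_dualCoord φ g).tsum_eq

theorem lacunary_exists_scalar_column_general (f : H2 X) (hdiff : BddDiffMultiplicity (spec f))
    (hinf : (spec f).Infinite)
    (hcpt : IsCompact (closure {v : X | ∃ k : ℕ, f k ≠ 0 ∧ v = ‖f k‖⁻¹ • f k})) :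
    ∃ x : X, x ≠ 0 ∧ ∀ N : ℕ, H2sub (Submodule.span ℂ {x}) ≤ Ef (bshift^[N] f) := by
  set r := tailSum fun n => ‖f n‖ ^ 2
  have hsq : 0 ≤ fun n => ‖f n‖ ^ 2 := fun _ => sq_nonneg _
  have hf := summable_sq_norm_coeff f
  have hr : ∀ n, 0 < r n := fun n => by
    obtain ⟨k, hk, hnk⟩ := hinf.exists_gt n
    exact tailSum_pos hsq hf hnk (pow_pos (norm_pos_iff.2 hk) 2)
  obtain ⟨x, hx1, hx⟩ := exists_norm_eq_one_mapClusterPt (not_summable_div_tailSum hsq hf hr)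
    (fun n hn => by simp [hn]) hcpt
  refine ⟨x, norm_ne_zero_iff.1 (hx1.trans_ne one_ne_zero), fun N => ?_⟩
  refine H2sub_span_singleton_le_Ef_of_forall_dual fun φ hφ m => ?_
  have hpair : ∀ᶠ k in atTop, HasSum (fun i => dualCoord φ i (f (k + i))) 0 := by
    filter_upwards [eventually_ge_atTop N] with k hk
    have h := hasSum_dualCoord φ (bshift^[k - N] (bshift^[N] f))
    rw [hφ] at h
    simpa only [← Function.iterate_add_apply, Nat.sub_add_cancel hk, bshift_iterate_apply] using h
  exact apply_eq_zero_of_mapClusterPt ((dualCoord φ m).restrictScalars ℝ) (fun n => (hr n).le)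
    (summable_sq_norm_apply_div_tailSum hf (summable_sq_norm_dualCoord φ) hdiff hpair m) hx

end

/-- A lacunary series in `H²(𝔻, X)` which is not a polynomial and whose normalized nonzero
coefficients form a relatively compact set admits a nonzero `x ∈ X` with
`H² ⊗ x ⊆ E_{S*^N f}` for all `N ≥ 0`. -/
theorem lacunary_exists_scalar_column {X : Type*} [NormedAddCommGroup X] [InnerProductSpace ℂ X] [CompleteSpace X]
    [TopologicalSpace.SeparableSpace X]
    (f : H2 X) (hlac : HadLac (spec f)) (hinf : (spec f).Infinite)
    (hcpt : IsCompact (closure {v : X | ∃ k : ℕ, f k ≠ 0 ∧ v = ‖f k‖⁻¹ • f k})) :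
    ∃ x : X, x ≠ 0 ∧
      ∀ N : ℕ, H2sub (Submodule.span ℂ {x}) ≤ Ef (bshift^[N] f) :=
  lacunary_exists_scalar_column_general f hlac.bddDiffMultiplicity hinf hcpt

end
end
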